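/- Let u ∈ E be differentially transcendental over F, and let P₁, Q₁, P₂, Q₂ ∈ F{u} be of total degree at most 1 with each pair Pᵢ, Qᵢ coprime and mᵢ := max(ord Pᵢ, ord Qᵢ) ≥ 0. Suppose the linear differential rational parametrization is proper, i.e. F⟨{P₁(u)/Q₁(u), P₂(u)/Q₂(u)}⟩ = F⟨{u}⟩. Then R := δ-Res(f₁,f₂) ∈ F{x,y} is nonzero, ord_x(R) = m₂, ord_y(R) = m₁, and R has degree exactly 1 in the variable x_{m₂} and degree exactly 1 in the variable y_{m₁}. -/

import Mathlib

/-!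
The variable `x_{m₂}` occurs in a single row of the resultant matrix, that of `d^{m₂} f₁`, and it
occurs there linearly with the coefficient row of `Q₁`; likewise `y_{m₁}` occurs only in the row of
`d^{m₁} f₂`, with the coefficient row of `Q₂`, and no higher `x_k`, `y_k` occur. So everything
follows once the matrix stays nonsingular when one of these two rows is replaced by the row of
`Q₁`, resp. `Q₂` (`degreeOf_det_eq_one`). It suffices to prove this after evaluation at the point
`(η₁, η₂)` with `ηᵢ = Pᵢ(u) / Qᵢ(u)`.

There, `fᵢ` becomes an affine operator in `u` whose linear part is `λᵢ ∈ E[∂]`. The columns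
`u_{m₁+m₂}, …, u_0` of the row of `d^k fᵢ` are the coefficients of `∂ᵏ λᵢ` (because
`[∂/∂u_j, d] = ∂/∂u_{j-1}`), and the last column is such that the row vanishes on the vector
`(D^{m₁+m₂} u, …, D u, u, 1)`. The replaced row takes on this vector the value `Qᵢ(u) ≠ 0`, so it
does not enter any linear relation between the rows. What remains is a relation
`∑_{k ≤ m₂} aₖ ∂ᵏ λ₁ + ∑_{k ≤ m₁} bₖ ∂ᵏ λ₂ = 0` in `E[∂]` with `a_{m₂} = 0` or `b_{m₁} = 0`, and
this is trivial (`relation_trivial`) for the following reasons.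

* `λᵢ` has order exactly `mᵢ`, by coprimality of `Pᵢ` and `Qᵢ` (`degree_linOp`).
* `λ₁` and `λ₂` generate the unit left ideal of `E[∂]`. Indeed `-λᵢ / Qᵢ(u)` is the differential
  `∑ (∂ηᵢ/∂u_k) ∂ᵏ` of `ηᵢ`, and if the parametrization is proper then `u` is a rational function
  of the derivatives of `η₁, η₂`; by the chain rule its differential `1` belongs to the left ideal
  generated by those of `η₁` and `η₂` (`one_mem_of_mem_genDF`).
* If, say, `a_{m₂} = 0` in a nontrivial relation, then `λ₂, …, ∂ʳ⁻¹ λ₂` with some `r < m₁` span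
  `E[∂]` modulo `E[∂] λ₁`, whereas this quotient has dimension `m₁` over `E` (`codim_le`).
-/

open MvPolynomial

noncomputable section

namespace DiffCurve

variable (F : Type*) {E : Type*} [Field F] [Field E] [Algebra F E]

/-- `F⟨S⟩`: the intermediate field of `E/F` generated by all iterated derivatives of
elements of `S`. -/
def genDF (D : Derivation ℤ E E) (S : Set E) : IntermediateField F E :=
  IntermediateField.adjoin F {x | ∃ s ∈ S, ∃ k : ℕ, (⇑D)^[k] s = x}

/-- `u` is differentially transcendental over `F`. -/
def DiffTrans (D : Derivation ℤ E E) (u : E) : Prop :=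
  AlgebraicIndependent F (fun k : ℕ => (⇑D)^[k] u)

/-- Evaluation of `P ∈ F{u}` at `v`: the `F`-algebra map sending `u_k ↦ D^k v`. -/
def evalD (D : Derivation ℤ E E) (v : E) : MvPolynomial ℕ F →ₐ[F] E :=
  aeval fun k => (⇑D)^[k] v

/-- Evaluation of `A ∈ F{x,y}` at `(η₁, η₂)`: `x_k ↦ D^k η₁`, `y_k ↦ D^k η₂`. -/
def evalD2 (D : Derivation ℤ E E) (η₁ η₂ : E) : MvPolynomial (Fin 2 × ℕ) F →ₐ[F] E :=
  aeval fun p => (⇑D)^[p.2] (if p.1 = 0 then η₁ else η₂)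

variable {F}

/-- The order of `P ∈ F{u}`: the largest `k` such that `u_k` occurs (`⊥` if none). -/
def ordU (P : MvPolynomial ℕ F) : WithBot ℕ := P.vars.max

/-- `ord_x` (for `i = 0`) resp. `ord_y` (for `i = 1`) of `A ∈ F{x,y}`. -/
def ordIdx (i : Fin 2) (A : MvPolynomial (Fin 2 × ℕ) F) : WithBot ℕ :=
  ((A.vars.filter fun v => v.1 = i).image Prod.snd).max

/-- `ord(A) = max(ord_x A, ord_y A)`. -/
def ordXY (A : MvPolynomial (Fin 2 × ℕ) F) : WithBot ℕ :=
  max (ordIdx 0 A) (ordIdx 1 A)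

/-- The separant of `A` w.r.t. `x`: `∂A/∂x_s` where `s = ord_x A` (junk value `1` if
`ord_x A = ⊥`). -/
def sepX (A : MvPolynomial (Fin 2 × ℕ) F) : MvPolynomial (Fin 2 × ℕ) F :=
  WithBot.recBotCoe 1 (fun s => pderiv ((0 : Fin 2), s) A) (ordIdx 0 A)

/-- The differential ideal `[A]` generated by `A`, for a derivation `d`. -/
def diffIdeal {R : Type*} [CommRing R] (d : Derivation ℤ R R) (A : R) : Ideal R :=
  Ideal.span (Set.range fun k : ℕ => (⇑d)^[k] A)

/-- The general component `sat(A) = [A] : S_A^∞` (as a set). -/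
def satSet (dxy : Derivation ℤ (MvPolynomial (Fin 2 × ℕ) F) (MvPolynomial (Fin 2 × ℕ) F))
    (A : MvPolynomial (Fin 2 × ℕ) F) : Set (MvPolynomial (Fin 2 × ℕ) F) :=
  {f | ∃ m : ℕ, sepX A ^ m * f ∈ diffIdeal dxy A}

variable (F)

/-- `(u, P₁, Q₁, P₂, Q₂)` is a differential rational parametrization of the differential
curve `(C, A)`. -/
def IsParam (D : Derivation ℤ E E)
    (dxy : Derivation ℤ (MvPolynomial (Fin 2 × ℕ) F) (MvPolynomial (Fin 2 × ℕ) F))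
    (A : MvPolynomial (Fin 2 × ℕ) F) (u : E) (P₁ Q₁ P₂ Q₂ : MvPolynomial ℕ F) : Prop :=
  DiffTrans F D u ∧
  P₁ ≠ 0 ∧ Q₁ ≠ 0 ∧ IsRelPrime P₁ Q₁ ∧ P₂ ≠ 0 ∧ Q₂ ≠ 0 ∧ IsRelPrime P₂ Q₂ ∧
  ¬ (evalD F D u P₁ / evalD F D u Q₁ ∈ (algebraMap F E).range ∧
     evalD F D u P₂ / evalD F D u Q₂ ∈ (algebraMap F E).range) ∧
  {B : MvPolynomial (Fin 2 × ℕ) F |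
      evalD2 F D (evalD F D u P₁ / evalD F D u Q₁) (evalD F D u P₂ / evalD F D u Q₂) B = 0}
    = satSet dxy A

/-- A proper differential rational parametrization: additionally
`F⟨η₁, η₂⟩ = F⟨u⟩`. -/
def IsProperParam (D : Derivation ℤ E E)
    (dxy : Derivation ℤ (MvPolynomial (Fin 2 × ℕ) F) (MvPolynomial (Fin 2 × ℕ) F))
    (A : MvPolynomial (Fin 2 × ℕ) F) (u : E) (P₁ Q₁ P₂ Q₂ : MvPolynomial ℕ F) : Prop :=
  IsParam F D dxy A u P₁ Q₁ P₂ Q₂ ∧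
  genDF F D {evalD F D u P₁ / evalD F D u Q₁, evalD F D u P₂ / evalD F D u Q₂}
    = genDF F D {u}

/-- The projection `F{x,y,u} → F{x,y}` sending `u_k ↦ 0` and keeping `x_k`, `y_k`. -/
def projXY : MvPolynomial (Fin 3 × ℕ) F →ₐ[F] MvPolynomial (Fin 2 × ℕ) F :=
  aeval fun p => if h : (p.1 : ℕ) < 2 then X ((⟨p.1, h⟩ : Fin 2), p.2) else 0

/-- The `i`-th row polynomial of the differential resultant matrix:
`d^{m₂}f₁, …, f₁, d^{m₁}f₂, …, f₂` where `f₁ = x₀·Q₁ − P₁`, `f₂ = y₀·Q₂ − P₂`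
in `F{x,y,u}`. -/
def resRow (dxyu : Derivation ℤ (MvPolynomial (Fin 3 × ℕ) F) (MvPolynomial (Fin 3 × ℕ) F))
    (P₁ Q₁ P₂ Q₂ : MvPolynomial ℕ F) (m₁ m₂ : ℕ) (i : ℕ) : MvPolynomial (Fin 3 × ℕ) F :=
  if i ≤ m₂ then
    (⇑dxyu)^[m₂ - i] (X ((0 : Fin 3), 0) * rename (fun k => ((2 : Fin 3), k)) Q₁
      - rename (fun k => ((2 : Fin 3), k)) P₁)
  else
    (⇑dxyu)^[m₁ + m₂ + 1 - i] (X ((1 : Fin 3), 0) * rename (fun k => ((2 : Fin 3), k)) Q₂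
      - rename (fun k => ((2 : Fin 3), k)) P₂)

/-- The differential resultant `δ-Res(f₁, f₂) ∈ F{x,y}`: the determinant of the
`(m₁+m₂+2) × (m₁+m₂+2)` matrix whose rows are the coefficient vectors of
`d^{m₂}f₁, …, f₁, d^{m₁}f₂, …, f₂` w.r.t. `u_{m₁+m₂}, …, u_1, u_0, 1`. -/
def deltaRes (dxyu : Derivation ℤ (MvPolynomial (Fin 3 × ℕ) F) (MvPolynomial (Fin 3 × ℕ) F))
    (P₁ Q₁ P₂ Q₂ : MvPolynomial ℕ F) (m₁ m₂ : ℕ) : MvPolynomial (Fin 2 × ℕ) F :=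
  Matrix.det (Matrix.of fun i j : Fin (m₁ + m₂ + 2) =>
    if (j : ℕ) ≤ m₁ + m₂ then
      projXY F (pderiv ((2 : Fin 3), m₁ + m₂ - (j : ℕ)) (resRow F dxyu P₁ Q₁ P₂ Q₂ m₁ m₂ i))
    else projXY F (resRow F dxyu P₁ Q₁ P₂ Q₂ m₁ m₂ i))

/-- A linear homogeneous differential polynomial `L = Σ_k a_k u_k` in `F{u}`. -/
def IsLinHom {F : Type*} [Field F] (L : MvPolynomial ℕ F) : Prop :=
  ∀ m ∈ L.support, ∃ k : ℕ, m = Finsupp.single k 1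

/-! ### Linear ordinary differential operators over `E` -/

section Operators

variable {E : Type*} [Field E]

/-- Left multiplication by `∂` on the Ore ring `E[∂]`, whose elements `∑ aₖ ∂ᵏ` are encoded as
the polynomials `∑ aₖ Xᵏ`: it sends `∑ aₖ ∂ᵏ` to `∑ (aₖ ∂ᵏ⁺¹ + D(aₖ) ∂ᵏ)`. -/
def dOp (D : Derivation ℤ E E) (p : Polynomial E) : Polynomial E :=
  Polynomial.X * p + p.sum fun n a => Polynomial.monomial n (D a)

variable (D : Derivation ℤ E E)

lemma coeff_dOp (p : Polynomial E) (j : ℕ) :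
    (dOp D p).coeff j = (if j = 0 then 0 else p.coeff (j - 1)) + D (p.coeff j) := by
  have h : (p.sum fun n a => Polynomial.monomial n (D a)).coeff j = D (p.coeff j) := by
    rw [Polynomial.sum_def, Polynomial.finsetSum_coeff]
    simp only [Polynomial.coeff_monomial]
    rw [Finset.sum_ite_eq']
    split_ifs with h
    · rfl
    · rw [Polynomial.notMem_support_iff.1 h, map_zero]
  rw [dOp, Polynomial.coeff_add, h]
  cases j <;> simp

lemma dOp_zero : dOp D 0 = 0 := by
  ext j; simp [coeff_dOp]

lemma dOp_add (p q : Polynomial E) : dOp D (p + q) = dOp D p + dOp D q := by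
  ext j; simp only [coeff_dOp, Polynomial.coeff_add, map_add]; split_ifs <;> ring

lemma dOp_smul (c : E) (p : Polynomial E) : dOp D (c • p) = c • dOp D p + D c • p := by
  ext j
  simp only [coeff_dOp, Polynomial.coeff_add, Polynomial.coeff_smul, smul_eq_mul,
    Derivation.leibniz]
  split_ifs <;> ring

lemma dOp_X_pow (k : ℕ) : dOp D (Polynomial.X ^ k) = Polynomial.X ^ (k + 1) := by
  ext j
  rw [coeff_dOp]
  simp only [Polynomial.coeff_X_pow]
  have : D (if j = k then (1 : E) else 0) = 0 := by split_ifs <;> simp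
  rw [this]
  cases j <;> simp

lemma degree_dOp {p : Polynomial E} {n : ℕ} (h : p.degree = n) :
    (dOp D p).degree = ((n + 1 : ℕ) : WithBot ℕ) := by
  have hlt : ∀ k, n < k → p.coeff k = 0 := fun k hk =>
    Polynomial.coeff_eq_zero_of_degree_lt (by rw [h]; exact_mod_cast hk)
  apply le_antisymm
  · rw [Polynomial.degree_le_iff_coeff_zero]
    intro k hk
    have hk' : n + 1 < k := by exact_mod_cast hk
    rw [coeff_dOp, hlt k (by omega), hlt (k - 1) (by omega)]
    simp
  · apply Polynomial.le_degree_of_ne_zero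
    rw [coeff_dOp, hlt (n + 1) (by omega)]
    simpa using Polynomial.coeff_ne_zero_of_eq_degree h

lemma degree_dOp_iterate {p : Polynomial E} {m : ℕ} (h : p.degree = m) (k : ℕ) :
    ((dOp D)^[k] p).degree = ((m + k : ℕ) : WithBot ℕ) := by
  induction k with
  | zero => simpa using h
  | succ k ih => rw [Function.iterate_succ_apply', degree_dOp D ih]; rfl

/-- To check that a span is a left ideal of `E[∂]`, it suffices to multiply generators by `∂`. -/
lemma dOp_mem_span {s : Set (Polynomial E)}
    (hs : ∀ x ∈ s, dOp D x ∈ Submodule.span E s) {p : Polynomial E}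
    (hp : p ∈ Submodule.span E s) : dOp D p ∈ Submodule.span E s := by
  induction hp using Submodule.span_induction with
  | mem x hx => exact hs x hx
  | zero => rw [dOp_zero]; exact zero_mem _
  | add x y _ _ hx hy => rw [dOp_add]; exact add_mem hx hy
  | smul c x hx' hx =>
    rw [dOp_smul]; exact add_mem (Submodule.smul_mem _ _ hx) (Submodule.smul_mem _ _ hx')

/-- A left ideal of `E[∂]` containing `1` is everything. -/
lemma eq_top_of_one_mem {T : Submodule E (Polynomial E)}
    (hT : ∀ x ∈ T, dOp D x ∈ T) (h1 : (1 : Polynomial E) ∈ T) : T = ⊤ := by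
  have hX : ∀ k, (Polynomial.X : Polynomial E) ^ k ∈ T := by
    intro k
    induction k with
    | zero => simpa using h1
    | succ k ih => rw [← dOp_X_pow D]; exact hT _ ih
  rw [eq_top_iff]
  intro p _
  rw [p.as_sum_range_C_mul_X_pow]
  refine Submodule.sum_mem _ fun i _ => ?_
  rw [← Polynomial.smul_eq_C_mul]
  exact Submodule.smul_mem _ _ (hX i)

/-- Polynomials of strictly increasing degrees do not cancel: a nontrivial combination has the
degree of its last nonzero term. -/
lemma degree_sum_of_staircase {m : ℕ} {f : ℕ → Polynomial E}
    (hf : ∀ k, (f k).degree = ((m + k : ℕ) : WithBot ℕ)) (c : ℕ → E) (n : ℕ)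
    (hc : ∃ k < n, c k ≠ 0) :
    ∃ r < n, c r ≠ 0 ∧ (∀ k, r < k → k < n → c k = 0) ∧
      (∑ k ∈ Finset.range n, c k • f k).degree = ((m + r : ℕ) : WithBot ℕ) := by
  induction n with
  | zero => obtain ⟨k, hk, _⟩ := hc; omega
  | succ n ih =>
    by_cases hn : c n = 0
    · obtain ⟨k, hk, hck⟩ := hc
      have hkn : k < n := by
        rcases Nat.lt_succ_iff_lt_or_eq.1 hk with h | h
        · exact h
        · subst h; exact absurd hn hck
      obtain ⟨r, hr, hcr, hz, hd⟩ := ih ⟨k, hkn, hck⟩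
      refine ⟨r, by omega, hcr, fun k hk1 hk2 => ?_, ?_⟩
      · rcases Nat.lt_succ_iff_lt_or_eq.1 hk2 with h | h
        · exact hz k hk1 h
        · rw [h, hn]
      · rw [Finset.sum_range_succ, hn, zero_smul, add_zero, hd]
    · refine ⟨n, by omega, hn, fun k h1 h2 => by omega, ?_⟩
      have htop : (c n • f n).degree = ((m + n : ℕ) : WithBot ℕ) := by
        rw [Polynomial.smul_eq_C_mul, Polynomial.degree_C_mul hn, hf]
      rw [Finset.sum_range_succ, Polynomial.degree_add_eq_right_of_degree_lt, htop]
      rw [htop]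
      refine lt_of_le_of_lt (Polynomial.degree_sum_le _ _) ?_
      rw [Finset.sup_lt_iff (WithBot.bot_lt_coe _)]
      intro k hk
      refine lt_of_le_of_lt (Polynomial.degree_smul_le _ _) ?_
      rw [hf]
      have := Finset.mem_range.1 hk
      exact_mod_cast (by omega : m + k < m + n)

/-- The quotient of `E[∂]` by the left ideal generated by an operator of order `m` has dimension
`m`, so it is not spanned by fewer than `m` elements. -/
lemma codim_le {m r : ℕ} {f : ℕ → Polynomial E}
    (hf : ∀ k, (f k).degree = ((m + k : ℕ) : WithBot ℕ)) (g : ℕ → Polynomial E)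
    (hT : Submodule.span E (Set.range f ∪ g '' Set.Iio r) = ⊤) : m ≤ r := by
  let S : Polynomial.Sequence E :=
    { elems' := fun k => if k < m then Polynomial.X ^ k else f (k - m)
      degree_eq' := fun k => by
        split_ifs with h
        · exact Polynomial.degree_X_pow k
        · rw [hf]; congr 1; omega }
  let b := S.basis fun i => (Polynomial.leadingCoeff_ne_zero.2 (S.ne_zero i)).isUnit
  have hb : ∀ k, b k = S k := fun k => S.basis_eq_self _ k
  let π : Polynomial E →ₗ[E] (Fin m → E) := LinearMap.pi fun k => b.coord k
  have hπ : ∀ i (k : Fin m), π (b i) k = if i = (k : ℕ) then 1 else 0 := by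
    intro i k
    simp [π, Finsupp.single_apply]
  have hf0 : ∀ i, π (f i) = 0 := by
    intro i
    have : f i = b (m + i) := by
      rw [hb]
      change f i = if m + i < m then _ else f (m + i - m)
      rw [if_neg (by omega), Nat.add_sub_cancel_left]
    ext k
    rw [this, hπ, if_neg (by have := k.2; omega)]
    rfl
  have hsurj : LinearMap.range π = ⊤ := by
    rw [eq_top_iff]
    intro v _
    refine ⟨∑ k : Fin m, v k • b k, ?_⟩
    ext j
    simp [hπ, Fin.val_inj]
  have hspan : Submodule.span E (Set.range fun k : Fin r => π (g k)) = ⊤ := by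
    rw [eq_top_iff, ← hsurj, LinearMap.range_eq_map, ← hT, Submodule.map_span,
      Submodule.span_le]
    rintro _ ⟨x, ⟨i, rfl⟩ | ⟨i, hi, rfl⟩, rfl⟩
    · rw [hf0]; exact zero_mem _
    · exact Submodule.subset_span ⟨⟨i, hi⟩, rfl⟩
  have := finrank_range_le_card (R := E) fun k : Fin r => π (g k)
  rw [Set.finrank, hspan, finrank_top] at this
  simpa using this

/-- If `λ₁, λ₂ ∈ E[∂]` of orders `m₁, m₂` generate the unit left ideal, a relation
`∑_{k ≤ m₂} aₖ ∂ᵏ λ₁ + ∑_{k ≤ m₁} bₖ ∂ᵏ λ₂ = 0` with `a_{m₂} = 0` is trivial: otherwise,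
comparing leading terms, the last nonzero `b_r` has `r < m₁`, hence `∂ʳ λ₂` reduces to lower
derivatives of `λ₂` modulo `E[∂] λ₁`, and `E[∂] / E[∂] λ₁`, of dimension `m₁`, would be spanned by
`λ₂, …, ∂ʳ⁻¹ λ₂`. -/
lemma relation_trivial {l₁ l₂ : Polynomial E} {m₁ m₂ : ℕ}
    (h₁ : l₁.degree = m₁) (h₂ : l₂.degree = m₂)
    (hS : (1 : Polynomial E) ∈ Submodule.span E
      (Set.range (fun k => (dOp D)^[k] l₁) ∪ Set.range (fun k => (dOp D)^[k] l₂)))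
    (a b : ℕ → E)
    (hab : ∑ k ∈ Finset.range (m₂ + 1), a k • (dOp D)^[k] l₁ +
      ∑ k ∈ Finset.range (m₁ + 1), b k • (dOp D)^[k] l₂ = 0) (ha : a m₂ = 0) :
    (∀ k < m₂ + 1, a k = 0) ∧ (∀ k < m₁ + 1, b k = 0) := by
  set f := fun k => (dOp D)^[k] l₁ with hfdef
  set g := fun k => (dOp D)^[k] l₂ with hgdef
  have hf : ∀ k, (f k).degree = ((m₁ + k : ℕ) : WithBot ℕ) := degree_dOp_iterate D h₁
  have hg : ∀ k, (g k).degree = ((m₂ + k : ℕ) : WithBot ℕ) := degree_dOp_iterate D h₂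
  have hfs : ∀ k, dOp D (f k) = f (k + 1) := fun k => (Function.iterate_succ_apply' _ _ _).symm
  have hgs : ∀ k, dOp D (g k) = g (k + 1) := fun k => (Function.iterate_succ_apply' _ _ _).symm
  change ∑ k ∈ Finset.range (m₂ + 1), a k • f k + ∑ k ∈ Finset.range (m₁ + 1), b k • g k = 0 at hab
  have hb : ∀ k < m₁ + 1, b k = 0 := by
    by_contra! hcon
    obtain ⟨r, hr, hbr, hbz, hdb⟩ := degree_sum_of_staircase hg b (m₁ + 1) hcon
    have hane : ∃ k < m₂ + 1, a k ≠ 0 := by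
      by_contra! h0
      rw [Finset.sum_eq_zero (s := Finset.range (m₂ + 1)) fun k hk => by
        rw [h0 k (Finset.mem_range.1 hk), zero_smul], zero_add] at hab
      rw [hab, Polynomial.degree_zero] at hdb
      exact WithBot.bot_ne_coe hdb
    obtain ⟨s, hs, has, -, hda⟩ := degree_sum_of_staircase hf a (m₂ + 1) hane
    rw [eq_neg_of_add_eq_zero_left hab, Polynomial.degree_neg, hdb] at hda
    have hrs : m₂ + r = m₁ + s := by exact_mod_cast hda
    have hsm : s ≠ m₂ := by rintro rfl; exact has ha
    have hrm : r < m₁ := by omega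
    set G := Set.range f ∪ g '' Set.Iio r with hG
    have hfG : ∀ i, f i ∈ Submodule.span E G := fun i =>
      Submodule.subset_span (Or.inl ⟨i, rfl⟩)
    have hgG : ∀ i < r, g i ∈ Submodule.span E G := fun i hi =>
      Submodule.subset_span (Or.inr ⟨i, hi, rfl⟩)
    have hgr : g r ∈ Submodule.span E G := by
      have hsum : ∑ k ∈ Finset.range (m₁ + 1), b k • g k
          = ∑ k ∈ Finset.range r, b k • g k + b r • g r := by
        rw [← Finset.sum_range_succ]
        symm
        apply Finset.sum_subset
        · intro k hk
          rw [Finset.mem_range] at *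
          omega
        · intro k hk hk'
          rw [Finset.mem_range] at *
          rw [hbz k (by omega) hk, zero_smul]
      rw [hsum] at hab
      have hbg : b r • g r = -(∑ k ∈ Finset.range (m₂ + 1), a k • f k
          + ∑ k ∈ Finset.range r, b k • g k) := by
        rw [eq_neg_iff_add_eq_zero, ← hab]; abel
      rw [← Submodule.smul_mem_iff _ hbr, hbg]
      refine neg_mem (add_mem ?_ ?_)
      · exact Submodule.sum_mem _ fun k _ => Submodule.smul_mem _ _ (hfG k)
      · exact Submodule.sum_mem _ fun k hk =>
          Submodule.smul_mem _ _ (hgG k (Finset.mem_range.1 hk))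
    have hst : ∀ x ∈ Submodule.span E G, dOp D x ∈ Submodule.span E G := by
      intro x hx
      refine dOp_mem_span D ?_ hx
      rintro _ (⟨i, rfl⟩ | ⟨i, hi, rfl⟩)
      · rw [hfs]; exact hfG _
      · rw [hgs]
        have hi : i < r := hi
        rcases Nat.lt_or_ge (i + 1) r with h | h
        · exact hgG _ h
        · rw [(by omega : i + 1 = r)]; exact hgr
    have hgall : ∀ k, g k ∈ Submodule.span E G := by
      intro k
      induction k with
      | zero =>
        rcases Nat.eq_zero_or_pos r with h | h
        · rw [← h]; exact hgr
        · exact hgG 0 h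
      | succ k ih => rw [← hgs]; exact hst _ ih
    have hle : Submodule.span E (Set.range f ∪ Set.range g) ≤ Submodule.span E G := by
      rw [Submodule.span_le]
      rintro _ (⟨i, rfl⟩ | ⟨i, rfl⟩)
      · exact hfG i
      · exact hgall i
    have := codim_le hf g (eq_top_of_one_mem D hst (hle hS))
    omega
  refine ⟨?_, hb⟩
  by_contra! hcon
  obtain ⟨s, -, -, -, hda⟩ := degree_sum_of_staircase hf a (m₂ + 1) hcon
  rw [Finset.sum_eq_zero (s := Finset.range (m₁ + 1)) fun k hk => by
    rw [hb k (Finset.mem_range.1 hk), zero_smul], add_zero] at hab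
  rw [hab, Polynomial.degree_zero] at hda
  exact WithBot.bot_ne_coe hda

end Operators

/-! ### Evaluation and differentiation in `F{x,y,u}` -/

section Eval

variable {F E : Type*} [Field F] [Field E] [Algebra F E]

/-- Evaluation of `p ∈ F{x,y,u}` at differential points: `x_k ↦ Dᵏ c₀`, `y_k ↦ Dᵏ c₁`,
`u_k ↦ Dᵏ c₂`. -/
def ev3 (D : Derivation ℤ E E) (c : Fin 3 → E) : MvPolynomial (Fin 3 × ℕ) F →ₐ[F] E :=
  aeval fun v => (⇑D)^[v.2] (c v.1)

/-- The inclusion `F{u} ⊆ F{x,y,u}`. -/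
abbrev incU (P : MvPolynomial ℕ F) : MvPolynomial (Fin 3 × ℕ) F :=
  rename (fun k => ((2 : Fin 3), k)) P

variable (D : Derivation ℤ E E)

variable {δF : Derivation ℤ F F}
  {d : Derivation ℤ (MvPolynomial (Fin 3 × ℕ) F) (MvPolynomial (Fin 3 × ℕ) F)}

lemma ev3_d (hD : ∀ a : F, D (algebraMap F E a) = algebraMap F E (δF a))
    (hdC : ∀ a : F, d (C a) = C (δF a))
    (hdX : ∀ (i : Fin 3) (k : ℕ), d (X (i, k)) = X (i, k + 1))
    (c : Fin 3 → E) (p : MvPolynomial (Fin 3 × ℕ) F) :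
    ev3 D c (d p) = D (ev3 D c p) := by
  induction p using MvPolynomial.induction_on with
  | C a => simp [hdC, hD, ev3]
  | add p q hp hq => simp [hp, hq]
  | mul_X p v hp =>
    obtain ⟨i, k⟩ := v
    have hX : ev3 (F := F) D c (X (i, k + 1)) = D (ev3 (F := F) D c (X (i, k))) := by
      simp [ev3, Function.iterate_succ_apply']
    simp only [Derivation.leibniz, smul_eq_mul, map_add, map_mul, hp, hdX, hX]

/-- The commutation rule `[∂/∂u_j, d] = ∂/∂u_{j-1}`. -/
lemma pderiv_d (hdC : ∀ a : F, d (C a) = C (δF a))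
    (hdX : ∀ (i : Fin 3) (k : ℕ), d (X (i, k)) = X (i, k + 1)) (p : MvPolynomial (Fin 3 × ℕ) F) (j : ℕ) :
    pderiv ((2 : Fin 3), j) (d p) = d (pderiv ((2 : Fin 3), j) p) +
      if j = 0 then 0 else pderiv ((2 : Fin 3), j - 1) p := by
  induction p using MvPolynomial.induction_on with
  | C a => simp [hdC]
  | add p q hp hq => simp only [map_add, hp, hq]; split_ifs <;> ring
  | mul_X p v hp =>
    obtain ⟨i, k⟩ := v
    have hcst : ∀ (w w' : Fin 3 × ℕ), d (pderiv (R := F) w (X w')) = 0 := by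
      intro w w'
      by_cases h : w = w'
      · subst h; rw [pderiv_X_self]; exact d.map_one_eq_zero
      · rw [pderiv_X_of_ne (Ne.symm h), map_zero]
    have hX : pderiv (R := F) ((2 : Fin 3), j) (X (i, k + 1)) =
        if j = 0 then 0 else pderiv (R := F) ((2 : Fin 3), j - 1) (X (i, k)) := by
      cases j with
      | zero => rw [if_pos rfl]; exact pderiv_X_of_ne (by simp)
      | succ j => simp [pderiv_X, Pi.single_apply]
    simp only [Derivation.leibniz, smul_eq_mul, map_add, hp, hdX, hX, hcst]
    split_ifs <;> ring

/-- The row vectors of the resultant matrix, evaluated at `c`, are obtained from one another by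
multiplication by `∂`. -/
lemma ev3_pderiv_iterate (c : Fin 3 → E) (p : MvPolynomial (Fin 3 × ℕ) F) (l : Polynomial E)
    (hD : ∀ a : F, D (algebraMap F E a) = algebraMap F E (δF a))
    (hdC : ∀ a : F, d (C a) = C (δF a))
    (hdX : ∀ (i : Fin 3) (k : ℕ), d (X (i, k)) = X (i, k + 1))
    (hl : ∀ j, ev3 D c (pderiv ((2 : Fin 3), j) p) = l.coeff j) (k j : ℕ) :
    ev3 D c (pderiv ((2 : Fin 3), j) ((⇑d)^[k] p)) = ((dOp D)^[k] l).coeff j := by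
  induction k generalizing j with
  | zero => exact hl j
  | succ k ih =>
    rw [Function.iterate_succ_apply', Function.iterate_succ_apply', pderiv_d hdC hdX, coeff_dOp,
      map_add, ev3_d D hD hdC hdX, ih, add_comm]
    congr 1
    split_ifs
    · rw [map_zero]
    · rw [ih]

/-- The value `∑ aₖ Dᵏ(u)` of an operator `∑ aₖ ∂ᵏ` at `u`. -/
def opVal (u : E) (p : Polynomial E) : E := p.sum fun k a => a * (⇑D)^[k] u

lemma opVal_eq (u : E) {p : Polynomial E} {n : ℕ} (h : p.degree < n) :
    opVal D u p = ∑ k ∈ Finset.range n, p.coeff k * (⇑D)^[k] u := by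
  rcases eq_or_ne p 0 with rfl | hp
  · simp [opVal]
  · exact Polynomial.sum_over_range' p (by simp) n ((Polynomial.natDegree_lt_iff_degree_lt hp).2 h)

lemma opVal_dOp (u : E) (p : Polynomial E) : opVal D u (dOp D p) = D (opVal D u p) := by
  obtain ⟨n, hn⟩ : ∃ n : ℕ, p.degree < n := ⟨p.natDegree + 1,
    lt_of_le_of_lt Polynomial.degree_le_natDegree (by exact_mod_cast Nat.lt_succ_self _)⟩
  have hz : p.coeff n = 0 := Polynomial.coeff_eq_zero_of_degree_lt hn
  have hn' : (dOp D p).degree < ((n + 1 : ℕ) : WithBot ℕ) := by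
    rw [Polynomial.degree_lt_iff_coeff_zero] at hn ⊢
    intro k hk
    rw [coeff_dOp, hn k (by omega), hn (k - 1) (by omega)]
    simp
  rw [opVal_eq D u hn, opVal_eq D u hn', map_sum]
  simp only [coeff_dOp, add_mul, Finset.sum_add_distrib, Derivation.leibniz, smul_eq_mul]
  rw [Finset.sum_range_succ', Finset.sum_range_succ _ n, hz]
  simp only [Function.iterate_succ_apply']
  simp [mul_comm]

end Eval

section Affine

variable {F E : Type*} [Field F] [Field E] [Algebra F E]

/-- A polynomial of total degree at most one is `c + ∑ aₖ u_k`. -/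
lemma eq_affine {P : MvPolynomial ℕ F} (hP : P.totalDegree ≤ 1) {n : ℕ}
    (hn : ∀ k ∈ P.vars, k < n) :
    P = C (coeff 0 P) + ∑ k ∈ Finset.range n, C (coeff (Finsupp.single k 1) P) * X k := by
  ext m
  rw [coeff_add, coeff_C, coeff_sum]
  simp only [coeff_C_mul, coeff_X]
  by_cases hm : m = 0
  · subst hm
    simp
  rw [if_neg (Ne.symm hm), zero_add]
  by_cases hex : ∃ k, m = Finsupp.single k 1
  · obtain ⟨k, rfl⟩ := hex
    simp only [Finsupp.single_left_inj one_ne_zero]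
    by_cases hk : k < n
    · rw [Finset.sum_eq_single k]
      · simp
      · intro b _ hb; simp [hb]
      · intro h; exact absurd (Finset.mem_range.2 hk) h
    · have h0 : coeff (Finsupp.single k 1) P = 0 := by
        by_contra hne
        exact hk (hn k ((mem_vars_iff_mem_support k).2 ⟨_, mem_support_iff.2 hne, by simp⟩))
      rw [h0]
      symm
      apply Finset.sum_eq_zero
      intro b hb
      have := Finset.mem_range.1 hb
      rw [if_neg (by omega), mul_zero]
  · push Not at hex
    rw [Finset.sum_eq_zero fun k _ => by rw [if_neg (Ne.symm (hex k)), mul_zero]]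
    by_contra hne
    have hdeg := le_trans (le_totalDegree (mem_support_iff.2 hne)) hP
    have hpos : ∃ k, m k ≠ 0 := by
      by_contra! h
      exact hm (Finsupp.ext h)
    obtain ⟨k, hk⟩ := hpos
    apply hex k
    ext j
    have hsum : m.sum (fun _ e => e) = m k + (m.erase k).sum fun _ e => e := by
      rw [Finsupp.add_sum_erase' m k (fun _ e => e) (fun _ => rfl)]
    by_cases hj : j = k
    · subst hj; rw [Finsupp.single_eq_same]; omega
    · rw [Finsupp.single_eq_of_ne hj]
      have h2 : (m.erase k).sum (fun _ e => e) = 0 := by omega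
      rw [Finsupp.sum, Finset.sum_eq_zero_iff] at h2
      by_contra hmj
      have h3 := h2 j (Finsupp.mem_support_iff.2 (by rw [Finsupp.erase_ne hj]; exact hmj))
      rw [Finsupp.erase_ne hj] at h3
      exact hmj h3

end Affine

/-! ### The differential of the parametrization -/

section Differential

variable {F E : Type*} [Field F] [Field E] [Algebra F E] (D : Derivation ℤ E E) (u : E)

/-- `IsDiff F D u x w` says that `x ∈ F⟨u⟩` has differential `w = ∑ (∂x/∂u_k) ∂ᵏ`, the
coefficients `∂x/∂u_k` being read off some fraction `A/B` representing `x`. The polynomials `A, B`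
are taken in `F{x,y,u}` because this is the ring on which a derivation is at hand; the variables
`x_k, y_k` are evaluated at `0`. -/
def IsDiff (F : Type*) {E : Type*} [Field F] [Field E] [Algebra F E] (D : Derivation ℤ E E)
    (u x : E) (w : Polynomial E) : Prop :=
  ∃ A B : MvPolynomial (Fin 3 × ℕ) F, ev3 D ![0, 0, u] B ≠ 0 ∧
    x * ev3 D ![0, 0, u] B = ev3 D ![0, 0, u] A ∧
    ∀ j, ev3 D ![0, 0, u] B * w.coeff j + x * ev3 D ![0, 0, u] (pderiv ((2 : Fin 3), j) B)
      = ev3 D ![0, 0, u] (pderiv ((2 : Fin 3), j) A)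

variable {D u}

lemma isDiff_algebraMap (a : F) : IsDiff F D u (algebraMap F E a) 0 :=
  ⟨C a, 1, by simp, by simp [ev3], fun j => by simp⟩

lemma IsDiff.add {x y : E} {v w : Polynomial E} (hx : IsDiff F D u x v) (hy : IsDiff F D u y w) :
    IsDiff F D u (x + y) (v + w) := by
  obtain ⟨A, B, h0, h1, h2⟩ := hx
  obtain ⟨A', B', h0', h1', h2'⟩ := hy
  refine ⟨A * B' + A' * B, B * B', by simp [h0, h0'], ?_, fun j => ?_⟩
  · simp only [map_mul, map_add]
    linear_combination ev3 D ![0, 0, u] B' * h1 + ev3 D ![0, 0, u] B * h1'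
  · simp only [map_mul, map_add, Derivation.leibniz, smul_eq_mul, Polynomial.coeff_add]
    linear_combination ev3 D ![0, 0, u] B' * h2 j + ev3 D ![0, 0, u] B * h2' j +
      ev3 D ![0, 0, u] (pderiv ((2 : Fin 3), j) B') * h1 +
      ev3 D ![0, 0, u] (pderiv ((2 : Fin 3), j) B) * h1'

lemma IsDiff.mul {x y : E} {v w : Polynomial E} (hx : IsDiff F D u x v) (hy : IsDiff F D u y w) :
    IsDiff F D u (x * y) (x • w + y • v) := by
  obtain ⟨A, B, h0, h1, h2⟩ := hx
  obtain ⟨A', B', h0', h1', h2'⟩ := hy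
  refine ⟨A * A', B * B', by simp [h0, h0'], ?_, fun j => ?_⟩
  · simp only [map_mul, ← h1, ← h1']
    ring
  · simp only [map_mul, map_add, Derivation.leibniz, smul_eq_mul, Polynomial.coeff_add,
      Polynomial.coeff_smul, ← h1, ← h1', ← h2, ← h2']
    ring

lemma IsDiff.inv {x : E} {v : Polynomial E} (hx : IsDiff F D u x v) (hne : x ≠ 0) :
    IsDiff F D u x⁻¹ ((-(x⁻¹ * x⁻¹)) • v) := by
  obtain ⟨A, B, h0, h1, h2⟩ := hx
  refine ⟨B, A, by rw [← h1]; exact mul_ne_zero hne h0, by rw [← h1]; field_simp, fun j => ?_⟩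
  simp only [Polynomial.coeff_smul, smul_eq_mul, ← h1, ← h2]
  field_simp
  ring

/-- The differential commutes with the derivations. -/
lemma IsDiff.deriv {δF : Derivation ℤ F F}
    (hD : ∀ a : F, D (algebraMap F E a) = algebraMap F E (δF a))
    {d : Derivation ℤ (MvPolynomial (Fin 3 × ℕ) F) (MvPolynomial (Fin 3 × ℕ) F)}
    (hdC : ∀ a : F, d (C a) = C (δF a))
    (hdX : ∀ (i : Fin 3) (k : ℕ), d (X (i, k)) = X (i, k + 1))
    {x : E} {v : Polynomial E} (hx : IsDiff F D u x v) : IsDiff F D u (D x) (dOp D v) := by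
  obtain ⟨A, B, h0, h1, h2⟩ := hx
  have h3 := congrArg D h1
  have h4 := fun j => congrArg D (h2 j)
  simp only [map_add, Derivation.leibniz, smul_eq_mul, ← ev3_d D hD hdC hdX] at h3 h4
  refine ⟨d A * B - A * d B, B * B, by simp [h0], ?_, fun j => ?_⟩
  · simp only [map_mul, map_sub]
    linear_combination ev3 D ![0, 0, u] B * h3 - ev3 D ![0, 0, u] (d B) * h1
  · have hA := pderiv_d hdC hdX A j
    have hB := pderiv_d hdC hdX B j
    simp only [map_mul, map_add, map_sub, Derivation.leibniz, smul_eq_mul, coeff_dOp, hA, hB]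
    cases j with
    | zero =>
      simp only [if_true, map_zero]
      linear_combination ev3 D ![0, 0, u] B * h4 0 +
        ev3 D ![0, 0, u] (pderiv ((2 : Fin 3), 0) B) * h3 -
        ev3 D ![0, 0, u] (d B) * h2 0 - ev3 D ![0, 0, u] (d (pderiv ((2 : Fin 3), 0) B)) * h1
    | succ j =>
      simp only [Nat.succ_ne_zero, if_false, Nat.add_sub_cancel]
      linear_combination ev3 D ![0, 0, u] B * h4 (j + 1) + ev3 D ![0, 0, u] B * h2 j +
        ev3 D ![0, 0, u] (pderiv ((2 : Fin 3), j + 1) B) * h3 -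
        ev3 D ![0, 0, u] (d B) * h2 (j + 1) -
        ev3 D ![0, 0, u] (d (pderiv ((2 : Fin 3), j + 1) B)) * h1 -
        ev3 D ![0, 0, u] (pderiv ((2 : Fin 3), j) B) * h1

/-- As `u` is differentially transcendental, a relation among the derivatives of `u` is an identity
of polynomials and can be differentiated with respect to `u_j`. -/
lemma ev3_pderiv_eq_zero (hu : DiffTrans F D u) {p : MvPolynomial (Fin 3 × ℕ) F}
    (hp : ev3 D ![0, 0, u] p = 0) (j : ℕ) :
    ev3 D ![0, 0, u] (pderiv ((2 : Fin 3), j) p) = 0 := by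
  let τ : MvPolynomial (Fin 3 × ℕ) F →ₐ[F] MvPolynomial ℕ F :=
    aeval fun v => if v.1 = 2 then X v.2 else 0
  have hτX : ∀ v, τ (X v) = if v.1 = 2 then X v.2 else 0 := fun v => aeval_X _ _
  have hτ : ∀ q, ev3 D ![0, 0, u] q = aeval (fun k : ℕ => (⇑D)^[k] u) (τ q) := by
    intro q
    change ev3 D ![0, 0, u] q = ((aeval fun k : ℕ => (⇑D)^[k] u).comp τ) q
    congr 1
    ext ⟨i, k⟩
    rw [AlgHom.comp_apply, hτX, ev3, aeval_X]
    fin_cases i <;> simp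
  have hcomm : ∀ q, τ (pderiv ((2 : Fin 3), j) q) = pderiv j (τ q) := by
    intro q
    induction q using MvPolynomial.induction_on with
    | C a => simp [τ]
    | add p q hp hq => simp only [map_add, hp, hq]
    | mul_X p v hp =>
      have hX : τ (pderiv (R := F) ((2 : Fin 3), j) (X v)) = pderiv j (τ (X v)) := by
        obtain ⟨i, k⟩ := v
        rw [hτX]
        fin_cases i <;> simp [pderiv_X, Pi.single_apply, apply_ite]
      simp only [Derivation.leibniz, smul_eq_mul, map_add, map_mul, hp, hX]
  have h0 : τ p = 0 := by
    have := hτ p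
    rw [hp] at this
    exact (injective_iff_map_eq_zero _).1 hu _ this.symm
  rw [hτ, hcomm, h0, map_zero, map_zero]

/-- The differential of `u` itself is `∂⁰`. -/
lemma IsDiff.eq_one (hu : DiffTrans F D u) {w : Polynomial E} (h : IsDiff F D u u w) : w = 1 := by
  obtain ⟨A, B, h0, h1, h2⟩ := h
  have hX : ev3 (F := F) D ![0, 0, u] (X (2, 0)) = u := by simp [ev3]
  have hp : ev3 D ![0, 0, u] (X (2, 0) * B - A) = 0 := by
    rw [map_sub, map_mul, hX, h1, sub_self]
  ext j
  have h3 := ev3_pderiv_eq_zero hu hp j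
  have h4 : ev3 D ![0, 0, u] (pderiv (R := F) ((2 : Fin 3), j) (X (2, 0)))
      = (1 : Polynomial E).coeff j := by
    rw [Polynomial.coeff_one]
    cases j <;> simp [pderiv_X]
  simp only [map_sub, Derivation.leibniz, smul_eq_mul, map_add, map_mul, hX, h4] at h3
  apply mul_left_cancel₀ h0
  linear_combination h2 j - h3

/-- The chain rule for the differential field `F⟨S⟩`: if it contains `u`, then the differentials of
the elements of `S` generate the unit left ideal of `E[∂]`. -/
lemma one_mem_of_mem_genDF {δF : Derivation ℤ F F}
    (hD : ∀ a : F, D (algebraMap F E a) = algebraMap F E (δF a))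
    {d : Derivation ℤ (MvPolynomial (Fin 3 × ℕ) F) (MvPolynomial (Fin 3 × ℕ) F)}
    (hdC : ∀ a : F, d (C a) = C (δF a))
    (hdX : ∀ (i : Fin 3) (k : ℕ), d (X (i, k)) = X (i, k + 1))
    (hu : DiffTrans F D u) {S : Set E} (huS : u ∈ genDF F D S)
    (T : Submodule E (Polynomial E)) (hT : ∀ w ∈ T, dOp D w ∈ T)
    (hS : ∀ s ∈ S, ∃ w ∈ T, IsDiff F D u s w) : (1 : Polynomial E) ∈ T := by
  have key : ∀ x ∈ genDF F D S, ∃ w ∈ T, IsDiff F D u x w := by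
    intro x hx
    induction hx using IntermediateField.adjoin_induction with
    | mem x hx =>
      obtain ⟨s, hs, k, rfl⟩ := hx
      induction k with
      | zero => exact hS s hs
      | succ k ih =>
        obtain ⟨w, hw, hd⟩ := ih
        rw [Function.iterate_succ_apply']
        exact ⟨_, hT _ hw, hd.deriv hD hdC hdX⟩
    | algebraMap a => exact ⟨0, zero_mem _, isDiff_algebraMap a⟩
    | add x y _ _ hx hy =>
      obtain ⟨v, hv, hv'⟩ := hx
      obtain ⟨w, hw, hw'⟩ := hy
      exact ⟨_, add_mem hv hw, hv'.add hw'⟩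
    | inv x _ hx =>
      obtain ⟨v, hv, hv'⟩ := hx
      rcases eq_or_ne x 0 with rfl | hne
      · exact ⟨v, hv, by rwa [inv_zero]⟩
      · exact ⟨_, Submodule.smul_mem _ _ hv, hv'.inv hne⟩
    | mul x y _ _ hx hy =>
      obtain ⟨v, hv, hv'⟩ := hx
      obtain ⟨w, hw, hw'⟩ := hy
      exact ⟨_, add_mem (Submodule.smul_mem _ _ hw) (Submodule.smul_mem _ _ hv), hv'.mul hw'⟩
  obtain ⟨w, hw, hd⟩ := key u huS
  rwa [hd.eq_one hu] at hw

end Differential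

/-! ### The operator attached to a linear fraction -/

section Fraction

variable {F E : Type*} [Field F] [Field E] [Algebra F E] {D : Derivation ℤ E E} {u : E}

/-- `λ = ∑_{k < n} (η q_k - p_k) ∂ᵏ`, the linear part in `u` of `η Q - P`, where `p_k, q_k` are the
coefficients of `u_k` in `P, Q`. -/
def linOp (η : E) (P Q : MvPolynomial ℕ F) (n : ℕ) : Polynomial E :=
  ∑ k ∈ Finset.range n, Polynomial.monomial k
    (η * algebraMap F E (coeff (Finsupp.single k 1) Q)
      - algebraMap F E (coeff (Finsupp.single k 1) P))

lemma coeff_single_eq_zero {P : MvPolynomial ℕ F} {n : ℕ} (hn : ∀ k ∈ P.vars, k < n) {k : ℕ}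
    (hk : n ≤ k) : coeff (Finsupp.single k 1) P = 0 := by
  by_contra hne
  have := hn k ((mem_vars_iff_mem_support k).2 ⟨_, mem_support_iff.2 hne, by simp⟩)
  omega

lemma coeff_linOp {η : E} {P Q : MvPolynomial ℕ F} {n : ℕ} (hP : ∀ k ∈ P.vars, k < n)
    (hQ : ∀ k ∈ Q.vars, k < n) (j : ℕ) :
    (linOp η P Q n).coeff j = η * algebraMap F E (coeff (Finsupp.single j 1) Q)
      - algebraMap F E (coeff (Finsupp.single j 1) P) := by
  rw [linOp, Polynomial.finsetSum_coeff]
  simp only [Polynomial.coeff_monomial]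
  rw [Finset.sum_ite_eq']
  split_ifs with h
  · rfl
  · rw [Finset.mem_range, not_lt] at h
    rw [coeff_single_eq_zero hP h, coeff_single_eq_zero hQ h]
    simp

lemma evalD_affine {P : MvPolynomial ℕ F} (hP : P.totalDegree ≤ 1) {n : ℕ}
    (hn : ∀ k ∈ P.vars, k < n) :
    evalD F D u P = algebraMap F E (coeff 0 P) +
      ∑ k ∈ Finset.range n, algebraMap F E (coeff (Finsupp.single k 1) P) * (⇑D)^[k] u := by
  conv_lhs => rw [eq_affine hP hn]
  simp [evalD]

lemma pderiv_incU {P : MvPolynomial ℕ F} (hP : P.totalDegree ≤ 1) (j : ℕ) :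
    pderiv ((2 : Fin 3), j) (incU P) = C (coeff (Finsupp.single j 1) P) := by
  obtain ⟨n, hn⟩ : ∃ n, ∀ k ∈ P.vars, k < n :=
    ⟨P.vars.sup id + 1, fun k hk => Nat.lt_succ_of_le (Finset.le_sup (f := id) hk)⟩
  conv_lhs => rw [incU, eq_affine hP hn]
  simp only [map_add, map_sum, map_mul, rename_C, rename_X, pderiv_C, Derivation.leibniz,
    smul_eq_mul, mul_zero, add_zero, zero_add, pderiv_X, Pi.single_apply, Prod.mk.injEq, true_and,
    mul_ite, mul_one, Finset.sum_ite_eq', Finset.mem_range]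
  split_ifs with h
  · rfl
  · rw [coeff_single_eq_zero hn (not_lt.1 h), C_0]

lemma projXY_incU {P : MvPolynomial ℕ F} (hP : P.totalDegree ≤ 1) :
    projXY F (incU P) = C (coeff 0 P) := by
  obtain ⟨n, hn⟩ : ∃ n, ∀ k ∈ P.vars, k < n :=
    ⟨P.vars.sup id + 1, fun k hk => Nat.lt_succ_of_le (Finset.le_sup (f := id) hk)⟩
  conv_lhs => rw [incU, eq_affine hP hn]
  simp [projXY]

/-- The polynomial `z₀ Q - P` defining the parametrization, where `z = x` for `i = 0` and `z = y`
for `i = 1`. -/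
def defPoly (i : Fin 2) (P Q : MvPolynomial ℕ F) : MvPolynomial (Fin 3 × ℕ) F :=
  X (i.castSucc, 0) * incU Q - incU P

lemma evalD2_projXY (η : Fin 2 → E) (p : MvPolynomial (Fin 3 × ℕ) F) :
    evalD2 F D (η 0) (η 1) (projXY F p) = ev3 D ![η 0, η 1, 0] p := by
  change ((evalD2 F D (η 0) (η 1)).comp (projXY F)) p = _
  congr 1
  ext ⟨i, k⟩
  fin_cases i <;> simp [projXY, evalD2, ev3]

lemma ev3_pderiv_defPoly {P Q : MvPolynomial ℕ F} (hP : P.totalDegree ≤ 1)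
    (hQ : Q.totalDegree ≤ 1) {n : ℕ} (hPn : ∀ k ∈ P.vars, k < n) (hQn : ∀ k ∈ Q.vars, k < n)
    (η : Fin 2 → E) (i : Fin 2) (j : ℕ) :
    ev3 D ![η 0, η 1, 0] (pderiv ((2 : Fin 3), j) (defPoly i P Q))
      = (linOp (η i) P Q n).coeff j := by
  have h0 : pderiv (R := F) ((2 : Fin 3), j) (X (i.castSucc, 0)) = 0 :=
    pderiv_X_of_ne (by fin_cases i <;> simp)
  have hX : ev3 (F := F) D ![η 0, η 1, 0] (X (i.castSucc, 0)) = η i := by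
    fin_cases i <;> simp [ev3]
  have hC : ∀ a : F, ev3 D ![η 0, η 1, 0] (C a) = algebraMap F E a := fun a => by simp [ev3]
  rw [coeff_linOp hPn hQn, defPoly, map_sub, Derivation.leibniz, h0, pderiv_incU hP,
    pderiv_incU hQ, smul_zero, add_zero, smul_eq_mul, map_sub, map_mul, hX, hC, hC]

lemma ev3_defPoly {P Q : MvPolynomial ℕ F} (hP : P.totalDegree ≤ 1)
    (hQ : Q.totalDegree ≤ 1) (η : Fin 2 → E) (i : Fin 2) :
    ev3 D ![η 0, η 1, 0] (defPoly i P Q)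
      = η i * algebraMap F E (coeff 0 Q) - algebraMap F E (coeff 0 P) := by
  have hX : ev3 (F := F) D ![η 0, η 1, 0] (X (i.castSucc, 0)) = η i := by
    fin_cases i <;> simp [ev3]
  rw [defPoly, map_sub, map_mul, hX, ← evalD2_projXY, ← evalD2_projXY, projXY_incU hP,
    projXY_incU hQ]
  simp [evalD2]

lemma degree_linOp_lt {η : E} {P Q : MvPolynomial ℕ F} {n : ℕ} :
    (linOp η P Q n).degree < n := by
  refine lt_of_le_of_lt (Polynomial.degree_sum_le _ _) ?_
  rw [Finset.sup_lt_iff (WithBot.bot_lt_coe _)]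
  intro k hk
  refine lt_of_le_of_lt (Polynomial.degree_monomial_le _ _) ?_
  exact_mod_cast Finset.mem_range.1 hk

/-- `u` is a zero of the affine polynomial `η Q - P` when `η Q(u) = P(u)`. -/
lemma opVal_linOp {P Q : MvPolynomial ℕ F} (hP : P.totalDegree ≤ 1)
    (hQ : Q.totalDegree ≤ 1) {n : ℕ} (hPn : ∀ k ∈ P.vars, k < n) (hQn : ∀ k ∈ Q.vars, k < n)
    {η : E} (hη : η * evalD F D u Q = evalD F D u P) :
    opVal D u (linOp η P Q n) +
      (η * algebraMap F E (coeff 0 Q) - algebraMap F E (coeff 0 P)) = 0 := by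
  rw [opVal_eq D u degree_linOp_lt]
  simp only [coeff_linOp hPn hQn, sub_mul, Finset.sum_sub_distrib, mul_assoc, ← Finset.mul_sum]
  rw [evalD_affine hP hPn, evalD_affine hQ hQn] at hη
  linear_combination hη

/-- The differential of `η = P(u)/Q(u)` is `-λ/Q(u)`. -/
lemma isDiff_fraction {P Q : MvPolynomial ℕ F} (hP : P.totalDegree ≤ 1)
    (hQ : Q.totalDegree ≤ 1) {n : ℕ} (hPn : ∀ k ∈ P.vars, k < n) (hQn : ∀ k ∈ Q.vars, k < n)
    {η : E} (hQ0 : evalD F D u Q ≠ 0) (hη : η * evalD F D u Q = evalD F D u P) :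
    IsDiff F D u η ((-(evalD F D u Q)⁻¹) • linOp η P Q n) := by
  have hev : ∀ R : MvPolynomial ℕ F, ev3 D ![0, 0, u] (incU R) = evalD F D u R := by
    intro R
    rw [ev3, incU, aeval_rename]
    rfl
  have hC : ∀ a : F, ev3 D ![0, 0, u] (C a) = algebraMap F E a := fun a => by simp [ev3]
  refine ⟨incU P, incU Q, by rwa [hev], by rw [hev, hev, hη], fun j => ?_⟩
  rw [hev, pderiv_incU hP, pderiv_incU hQ, hC, hC, Polynomial.coeff_smul, coeff_linOp hPn hQn,
    smul_eq_mul]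
  field_simp
  ring

lemma ne_zero_of_isRelPrime {P Q : MvPolynomial ℕ F} (hrel : IsRelPrime P Q) {m : ℕ}
    (hm : max (ordU P) (ordU Q) = (m : WithBot ℕ)) : Q ≠ 0 := by
  rintro rfl
  obtain ⟨r, -, hr⟩ := MvPolynomial.isUnit_iff_eq_C_of_isReduced.1 (hrel dvd_rfl (dvd_zero P))
  subst hr
  simp [ordU] at hm

lemma vars_lt_of_ord {P : MvPolynomial ℕ F} {m : ℕ} (hm : ordU P ≤ (m : WithBot ℕ)) :
    ∀ k ∈ P.vars, k < m + 1 := by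
  intro k hk
  have : (k : WithBot ℕ) ≤ m := le_trans (Finset.le_max hk) hm
  exact Nat.lt_succ_of_le (by exact_mod_cast this)

lemma coeff_ne_zero_of_ord {P : MvPolynomial ℕ F} (hP : P.totalDegree ≤ 1) {m : ℕ}
    (hm : ordU P = (m : WithBot ℕ)) : coeff (Finsupp.single m 1) P ≠ 0 := by
  intro h0
  have hmem : m ∈ P.vars := Finset.mem_of_max hm
  have hlt : ∀ k ∈ P.vars, k < m + 1 := vars_lt_of_ord hm.le
  have h := eq_affine hP hlt
  rw [Finset.sum_range_succ, h0, C_0, zero_mul, add_zero] at h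
  have hd : pderiv m P = 0 := by
    rw [h, map_add, pderiv_C, map_sum, zero_add]
    refine Finset.sum_eq_zero fun k hk => ?_
    rw [Derivation.leibniz, pderiv_C, pderiv_X_of_ne (by have := Finset.mem_range.1 hk; omega)]
    simp
  have hsub : P ∈ supported F (Set.Iio m) := by
    rw [h]
    refine add_mem (Subalgebra.algebraMap_mem _ _) (sum_mem fun k hk => ?_)
    refine mul_mem (Subalgebra.algebraMap_mem _ _) ?_
    exact Algebra.subset_adjoin ⟨k, Finset.mem_range.1 hk, rfl⟩
  have := mem_supported.1 hsub hmem
  exact lt_irrefl m this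

/-- `λ` has order exactly `m = max(ord P, ord Q)`: otherwise `P(u) / Q(u) = p_m / q_m` would be a
constant, making `P` and `Q` proportional, against coprimality. -/
lemma degree_linOp {P Q : MvPolynomial ℕ F} (hP : P.totalDegree ≤ 1)
    (hQ : Q.totalDegree ≤ 1) (hrel : IsRelPrime P Q) {m : ℕ}
    (hm : max (ordU P) (ordU Q) = (m : WithBot ℕ)) (hu : DiffTrans F D u)
    {η : E} (hη : η * evalD F D u Q = evalD F D u P) :
    (linOp η P Q (m + 1)).degree = m := by
  have hPn := vars_lt_of_ord (le_max_left _ _ |>.trans hm.le)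
  have hQn := vars_lt_of_ord (le_max_right _ _ |>.trans hm.le)
  apply le_antisymm
  · rw [Polynomial.degree_le_iff_coeff_zero]
    intro k hk
    have hk' : m + 1 ≤ k := by exact_mod_cast hk
    exact Polynomial.coeff_eq_zero_of_degree_lt
      (lt_of_lt_of_le degree_linOp_lt (by exact_mod_cast hk'))
  apply Polynomial.le_degree_of_ne_zero
  rw [coeff_linOp hPn hQn]
  set p := coeff (Finsupp.single m 1) P
  set q := coeff (Finsupp.single m 1) Q
  have hpq : p ≠ 0 ∨ q ≠ 0 := by
    rcases max_choice (ordU P) (ordU Q) with h | h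
    · exact Or.inl (coeff_ne_zero_of_ord hP (h ▸ hm))
    · exact Or.inr (coeff_ne_zero_of_ord hQ (h ▸ hm))
  intro h0
  have hpoly : C q * P = C p * Q := by
    apply hu
    change evalD F D u _ = evalD F D u _
    have hC : ∀ a : F, evalD F D u (C a) = algebraMap F E a := fun a => by simp [evalD]
    rw [map_mul, map_mul, hC, hC]
    linear_combination evalD F D u Q * h0 - algebraMap F E q * hη
  have hcst : ∀ R : MvPolynomial ℕ F, IsUnit R → coeff (Finsupp.single m 1) R = 0 := by
    intro R hR
    obtain ⟨r, -, rfl⟩ := MvPolynomial.isUnit_iff_eq_C_of_isReduced.1 hR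
    rw [coeff_C, if_neg]
    intro h
    simpa using congrArg (fun f => f m) h
  have hp : p ≠ 0 → P ∣ Q := fun hp =>
    (hp.isUnit.map (C : F →+* MvPolynomial ℕ F)).dvd_mul_left.1 (Dvd.intro_left _ hpoly)
  have hq : q ≠ 0 → Q ∣ P := fun hq =>
    (hq.isUnit.map (C : F →+* MvPolynomial ℕ F)).dvd_mul_left.1 (Dvd.intro_left _ hpoly.symm)
  -- whichever of `p, q` is nonzero, the corresponding polynomial would be a unit
  rcases hpq with h | h
  · exact h (hcst P (hrel dvd_rfl (hp h)))
  · exact h (hcst Q (hrel (hq h) dvd_rfl))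

end Fraction

/-! ### Shape of the resultant matrix -/

section Shape

variable {F : Type*} [Field F]

lemma map_mem_supported {δF : Derivation ℤ F F}
    {d : Derivation ℤ (MvPolynomial (Fin 3 × ℕ) F) (MvPolynomial (Fin 3 × ℕ) F)}
    (hdC : ∀ a : F, d (C a) = C (δF a))
    (hdX : ∀ (i : Fin 3) (k : ℕ), d (X (i, k)) = X (i, k + 1))
    {s t : Set (Fin 3 × ℕ)} (hst : ∀ v ∈ s, v ∈ t ∧ (v.1, v.2 + 1) ∈ t)
    {p : MvPolynomial (Fin 3 × ℕ) F} (hp : p ∈ supported F s) : d p ∈ supported F t := by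
  have hle : supported F s ≤ supported F t := supported_mono fun v hv => (hst v hv).1
  induction hp using Algebra.adjoin_induction with
  | mem x hx =>
    obtain ⟨⟨i, k⟩, hv, rfl⟩ := hx
    rw [hdX]
    exact Algebra.subset_adjoin ⟨_, (hst _ hv).2, rfl⟩
  | algebraMap a => rw [algebraMap_eq, hdC]; exact Subalgebra.algebraMap_mem _ _
  | add x y _ _ hx hy => rw [map_add]; exact add_mem hx hy
  | mul x y hx' hy' hx hy =>
    rw [Derivation.leibniz]
    exact add_mem (mul_mem (hle hx') hy) (mul_mem (hle hy') hx)

lemma pderiv_mem_supported {σ : Type*} {s : Set σ} {p : MvPolynomial σ F} (v : σ)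
    (hp : p ∈ supported F s) : pderiv v p ∈ supported F s := by
  classical
  induction hp using Algebra.adjoin_induction with
  | mem x hx =>
    obtain ⟨w, -, rfl⟩ := hx
    rw [pderiv_X, Pi.single_apply]
    split_ifs
    · exact one_mem _
    · exact zero_mem _
  | algebraMap a => rw [algebraMap_eq, pderiv_C]; exact zero_mem _
  | add x y _ _ hx hy => rw [map_add]; exact add_mem hx hy
  | mul x y hx' hy' hx hy =>
    rw [Derivation.leibniz]
    exact add_mem (mul_mem hx' hy) (mul_mem hy' hx)

lemma projXY_mem_supported {s : Set (Fin 3 × ℕ)} {t : Set (Fin 2 × ℕ)}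
    (hst : ∀ (i : Fin 2) k, (i.castSucc, k) ∈ s → (i, k) ∈ t)
    {p : MvPolynomial (Fin 3 × ℕ) F} (hp : p ∈ supported F s) :
    projXY F p ∈ supported F t := by
  induction hp using Algebra.adjoin_induction with
  | mem x hx =>
    obtain ⟨⟨i, k⟩, hv, rfl⟩ := hx
    rw [projXY, aeval_X]
    split_ifs with h
    · exact Algebra.subset_adjoin ⟨_, hst ⟨i, h⟩ k hv, rfl⟩
    · exact zero_mem _
  | algebraMap a => rw [AlgHom.commutes]; exact Subalgebra.algebraMap_mem _ _
  | add x y _ _ hx hy => rw [map_add]; exact add_mem hx hy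
  | mul x y _ _ hx hy => rw [map_mul]; exact mul_mem hx hy

/-- The `j`-th entry of the row attached to `p ∈ F{x,y,u}`, columns being indexed by
`u_n, …, u_0, 1`. -/
def rowEntry (n j : ℕ) (p : MvPolynomial (Fin 3 × ℕ) F) : MvPolynomial (Fin 2 × ℕ) F :=
  if j ≤ n then projXY F (pderiv ((2 : Fin 3), n - j) p) else projXY F p

/-- The `j`-th entry of the row attached to `Q ∈ F{u}` of total degree at most one. -/
def constEntry (n j : ℕ) (Q : MvPolynomial ℕ F) : F :=
  if j ≤ n then coeff (Finsupp.single (n - j) 1) Q else coeff 0 Q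

/-- The `i`-th row of the resultant matrix belongs to `d^k f₁` resp. `d^k f₂` when
`rowIdx m₁ m₂ i` is `(0, k)` resp. `(1, k)`. -/
def rowIdx (m₁ m₂ i : ℕ) : Fin 2 × ℕ :=
  if i ≤ m₂ then (0, m₂ - i) else (1, m₁ + m₂ + 1 - i)

/-- `d^k (z₀ Q - P) = z_k Q + g` where `g` involves only `z_0, …, z_{k-1}` and the `u_j`. -/
lemma iterate_defPoly {δF : Derivation ℤ F F}
    {d : Derivation ℤ (MvPolynomial (Fin 3 × ℕ) F) (MvPolynomial (Fin 3 × ℕ) F)}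
    (hdC : ∀ a : F, d (C a) = C (δF a))
    (hdX : ∀ (i : Fin 3) (k : ℕ), d (X (i, k)) = X (i, k + 1))
    (i : Fin 2) (P Q : MvPolynomial ℕ F) (k : ℕ) :
    ∃ g ∈ supported F {v : Fin 3 × ℕ | v.1 = 2 ∨ (v.1 = i.castSucc ∧ v.2 < k)},
      (⇑d)^[k] (defPoly i P Q) = X (i.castSucc, k) * incU Q + g := by
  have hinc : ∀ (R : MvPolynomial ℕ F), incU R ∈ supported F {v : Fin 3 × ℕ | v.1 = 2} := by
    intro R
    induction R using MvPolynomial.induction_on with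
    | C a => rw [incU, rename_C]; exact Subalgebra.algebraMap_mem _ _
    | add p q hp hq => rw [incU, map_add]; exact add_mem hp hq
    | mul_X p n hp =>
      rw [incU, map_mul, rename_X]
      exact mul_mem hp (Algebra.subset_adjoin ⟨_, rfl, rfl⟩)
  induction k with
  | zero =>
    refine ⟨-incU P, neg_mem (supported_mono (fun v hv => Or.inl hv) (hinc P)), ?_⟩
    rw [Function.iterate_zero_apply, defPoly, sub_eq_add_neg]
  | succ k ih =>
    obtain ⟨g, hg, hk⟩ := ih
    refine ⟨X (i.castSucc, k) * d (incU Q) + d g, add_mem (mul_mem ?_ ?_) ?_, ?_⟩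
    · exact Algebra.subset_adjoin ⟨_, Or.inr ⟨rfl, Nat.lt_succ_self k⟩, rfl⟩
    · exact map_mem_supported hdC hdX (fun v hv => ⟨Or.inl hv, Or.inl hv⟩) (hinc Q)
    · refine map_mem_supported hdC hdX (fun v hv => ?_) hg
      rcases hv with hv | ⟨hv1, hv2⟩
      · exact ⟨Or.inl hv, Or.inl hv⟩
      · exact ⟨Or.inr ⟨hv1, Nat.lt_succ_of_lt hv2⟩, Or.inr ⟨hv1, Nat.succ_lt_succ hv2⟩⟩
    · rw [Function.iterate_succ_apply', hk, map_add, Derivation.leibniz, hdX, smul_eq_mul,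
        smul_eq_mul]
      ring

/-- The row of `d^k f₁` (resp. `d^k f₂`) is `x_k` (resp. `y_k`) times the row of `Q`, plus terms of
lower order. -/
lemma rowEntry_iterate {δF : Derivation ℤ F F}
    {d : Derivation ℤ (MvPolynomial (Fin 3 × ℕ) F) (MvPolynomial (Fin 3 × ℕ) F)}
    (hdC : ∀ a : F, d (C a) = C (δF a))
    (hdX : ∀ (i : Fin 3) (k : ℕ), d (X (i, k)) = X (i, k + 1))
    (i : Fin 2) (P : MvPolynomial ℕ F) {Q : MvPolynomial ℕ F} (hQ : Q.totalDegree ≤ 1)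
    (n k j : ℕ) :
    ∃ g ∈ supported F {v : Fin 2 × ℕ | v.1 = i ∧ v.2 < k},
      rowEntry n j ((⇑d)^[k] (defPoly i P Q)) = X (i, k) * C (constEntry n j Q) + g := by
  obtain ⟨g, hg, hk⟩ := iterate_defPoly hdC hdX i P Q k
  have hX : projXY F (X (i.castSucc, k)) = X (i, k) := by
    rw [projXY, aeval_X]
    exact dif_pos i.2
  have hst : ∀ (i' : Fin 2) l,
      (i'.castSucc, l) ∈ {v : Fin 3 × ℕ | v.1 = 2 ∨ (v.1 = i.castSucc ∧ v.2 < k)} →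
      (i', l) ∈ {v : Fin 2 × ℕ | v.1 = i ∧ v.2 < k} := by
    rintro i' l (h | ⟨h1, h2⟩)
    · exact absurd (congrArg Fin.val h) (by have := i'.2; simp; omega)
    · exact ⟨Fin.castSucc_injective _ h1, h2⟩
  rw [hk]
  unfold rowEntry constEntry
  split_ifs with h
  · refine ⟨_, projXY_mem_supported hst (pderiv_mem_supported ((2 : Fin 3), n - j) hg), ?_⟩
    rw [map_add, Derivation.leibniz, pderiv_incU hQ,
      pderiv_X_of_ne (i := ((2 : Fin 3), n - j)) (j := (i.castSucc, k)) (by fin_cases i <;> simp),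
      smul_zero, add_zero, smul_eq_mul, map_add, map_mul, hX]
    simp [projXY]
  · refine ⟨_, projXY_mem_supported hst hg, ?_⟩
    rw [map_add, map_mul, hX, projXY_incU hQ]

lemma det_mem_supported {σ : Type*} {s : Set σ} {N : ℕ}
    {M : Matrix (Fin N) (Fin N) (MvPolynomial σ F)} (hM : ∀ i j, M i j ∈ supported F s) :
    M.det ∈ supported F s := by
  rw [Matrix.det_apply']
  refine sum_mem fun π _ => mul_mem (intCast_mem _ _) (prod_mem fun i _ => hM _ _)

/-- A variable `v` occurring in a single row `i₀`, linearly and with coefficient row `q`, occurs in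
the determinant with degree one as soon as the matrix with row `i₀` replaced by `q` is
nonsingular. -/
lemma degreeOf_det_eq_one {σ : Type*} {N : ℕ}
    (M : Matrix (Fin N) (Fin N) (MvPolynomial σ F)) (v : σ) (i₀ : Fin N)
    (q : Fin N → F) (g : Fin N → MvPolynomial σ F) (hg : ∀ j, g j ∈ supported F {v}ᶜ)
    (hrow : ∀ j, M i₀ j = X v * C (q j) + g j)
    (hM : ∀ i j, i ≠ i₀ → M i j ∈ supported F {v}ᶜ)
    (hdet : (M.updateRow i₀ fun j => C (q j)).det ≠ 0) : degreeOf v M.det = 1 := by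
  have hsup : ∀ r : Fin N → MvPolynomial σ F, (∀ j, r j ∈ supported F {v}ᶜ) →
      degreeOf v (M.updateRow i₀ r).det = 0 := by
    intro r hr
    have hmem : (M.updateRow i₀ r).det ∈ supported F {v}ᶜ := by
      refine det_mem_supported fun i j => ?_
      by_cases h : i = i₀
      · subst h; rw [Matrix.updateRow_self]; exact hr j
      · rw [Matrix.updateRow_ne h]; exact hM i j h
    by_contra hne
    exact mem_supported.1 hmem (mem_vars_iff_degreeOf_ne_zero.2 hne) rfl
  have hexp : M.det = (M.updateRow i₀ fun j => C (q j)).det * X v + (M.updateRow i₀ g).det := by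
    conv_lhs => rw [← M.updateRow_eq_self i₀]
    rw [show M i₀ = (X v : MvPolynomial σ F) • (fun j => C (q j)) + g from funext hrow,
      Matrix.det_updateRow_add, Matrix.det_updateRow_smul, mul_comm]
  have h1 : degreeOf v ((M.updateRow i₀ fun j => C (q j)).det * X v) = 1 := by
    have := degreeOf_mul_X_self_pow_eq_add_of_ne_zero v 1 hdet
    rwa [pow_one, hsup (fun j => C (q j)) fun j => Subalgebra.algebraMap_mem _ _] at this
  rw [hexp, degreeOf_add_eq_of_degreeOf_lt, h1]
  rw [h1, hsup g hg]
  exact one_pos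

end Shape

/-! ### Nonvanishing of the leading coefficients -/

section Nonvanishing

variable {F E : Type*} [Field F] [Field E] [Algebra F E]

/-- `relation_trivial`, with the operators listed in the order of the rows of the resultant
matrix. -/
lemma rows_relation_trivial (D : Derivation ℤ E E) {l : Fin 2 → Polynomial E} {m₁ m₂ : ℕ}
    (h₁ : (l 0).degree = m₁) (h₂ : (l 1).degree = m₂)
    (hS : (1 : Polynomial E) ∈ Submodule.span E
      (Set.range (fun k => (dOp D)^[k] (l 0)) ∪ Set.range (fun k => (dOp D)^[k] (l 1))))
    (v : ℕ → E)
    (hv : ∑ i ∈ Finset.range (m₁ + m₂ + 2),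
      v i • (dOp D)^[(rowIdx m₁ m₂ i).2] (l (rowIdx m₁ m₂ i).1) = 0)
    (hv0 : v 0 = 0 ∨ v (m₂ + 1) = 0) : ∀ i < m₁ + m₂ + 2, v i = 0 := by
  have hsum : ∑ k ∈ Finset.range (m₂ + 1), v (m₂ - k) • (dOp D)^[k] (l 0) +
      ∑ k ∈ Finset.range (m₁ + 1), v (m₁ + m₂ + 1 - k) • (dOp D)^[k] (l 1) = 0 := by
    rw [show m₁ + m₂ + 2 = (m₂ + 1) + (m₁ + 1) by omega, Finset.sum_range_add] at hv
    rw [← hv]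
    congr 1
    · rw [← Finset.sum_range_reflect]
      refine Finset.sum_congr rfl fun k hk => ?_
      have hk := Finset.mem_range.1 hk
      rw [rowIdx, if_pos (by omega), show m₂ - (m₂ + 1 - 1 - k) = k by omega,
        show m₂ + 1 - 1 - k = m₂ - k by omega]
    · rw [← Finset.sum_range_reflect]
      refine Finset.sum_congr rfl fun k hk => ?_
      have hk := Finset.mem_range.1 hk
      rw [rowIdx, if_neg (by omega),
        show m₁ + m₂ + 1 - (m₁ + 1 - 1 - k) = m₂ + 1 + k by omega,
        show m₁ + m₂ + 1 - (m₂ + 1 + k) = m₁ + 1 - 1 - k by omega]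
  have hall : (∀ k < m₂ + 1, v (m₂ - k) = 0) ∧ (∀ k < m₁ + 1, v (m₁ + m₂ + 1 - k) = 0) := by
    rcases hv0 with h | h
    · exact relation_trivial D h₁ h₂ hS (fun k => v (m₂ - k)) (fun k => v (m₁ + m₂ + 1 - k)) hsum
        (by simpa using h)
    · rw [Set.union_comm] at hS
      rw [add_comm] at hsum
      refine (relation_trivial D h₂ h₁ hS (fun k => v (m₁ + m₂ + 1 - k)) (fun k => v (m₂ - k))
        hsum ?_).symm
      rw [show m₁ + m₂ + 1 - m₁ = m₂ + 1 by omega]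
      exact h
  intro i hi
  rcases Nat.lt_or_ge m₂ i with h | h
  · have := hall.2 (m₁ + m₂ + 1 - i) (by omega)
    rwa [show m₁ + m₂ + 1 - (m₁ + m₂ + 1 - i) = i by omega] at this
  · have := hall.1 (m₂ - i) (by omega)
    rwa [show m₂ - (m₂ - i) = i by omega] at this

/-- Pairing a row with the column vector `(Dⁿ u, …, u, 1)`. -/
lemma sum_row_mul (D : Derivation ℤ E E) (u : E) (n : ℕ) (a : ℕ → E) (c : E) :
    ∑ j : Fin (n + 2), (if (j : ℕ) ≤ n then a (n - j) else c) *
      (if (j : ℕ) ≤ n then (⇑D)^[n - j] u else 1)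
      = ∑ k ∈ Finset.range (n + 1), a k * (⇑D)^[k] u + c := by
  rw [← Finset.sum_range fun j => (if j ≤ n then a (n - j) else c) *
    (if j ≤ n then (⇑D)^[n - j] u else 1), Finset.sum_range_succ, ← Finset.sum_range_reflect]
  congr 1
  · refine Finset.sum_congr rfl fun k hk => ?_
    have hk := Finset.mem_range.1 hk
    rw [if_pos (by omega), if_pos (by omega), show n - (n + 1 - 1 - k) = k by omega]
  · simp

/-- The evaluated matrix with the row `i₀` of a top derivative replaced by a row not vanishing on
`(Dⁿ u, …, u, 1)` is nonsingular. All other rows vanish on this vector, so a linear relation among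
the rows does not involve row `i₀`; the relation among the remaining rows is trivial. -/
lemma det_ne_zero_of_rows (D : Derivation ℤ E E) (u : E) {l : Fin 2 → Polynomial E} {m₁ m₂ : ℕ}
    (h₁ : (l 0).degree = m₁) (h₂ : (l 1).degree = m₂)
    (hS : (1 : Polynomial E) ∈ Submodule.span E
      (Set.range (fun k => (dOp D)^[k] (l 0)) ∪ Set.range (fun k => (dOp D)^[k] (l 1))))
    (c : ℕ → E)
    (hc : ∀ i, opVal D u ((dOp D)^[(rowIdx m₁ m₂ i).2] (l (rowIdx m₁ m₂ i).1)) + c i = 0)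
    (i₀ : Fin (m₁ + m₂ + 2)) (hi₀ : (i₀ : ℕ) = 0 ∨ (i₀ : ℕ) = m₂ + 1)
    (M : Matrix (Fin (m₁ + m₂ + 2)) (Fin (m₁ + m₂ + 2)) E)
    (hM : ∀ i j, i ≠ i₀ → M i j = if (j : ℕ) ≤ m₁ + m₂ then
      ((dOp D)^[(rowIdx m₁ m₂ i).2] (l (rowIdx m₁ m₂ i).1)).coeff (m₁ + m₂ - j) else c i)
    (hM₀ : ∑ j, M i₀ j * (if (j : ℕ) ≤ m₁ + m₂ then (⇑D)^[m₁ + m₂ - j] u else 1) ≠ 0) :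
    M.det ≠ 0 := by
  set op : ℕ → Polynomial E := fun i => (dOp D)^[(rowIdx m₁ m₂ i).2] (l (rowIdx m₁ m₂ i).1)
    with hop
  have hdeg : ∀ i < m₁ + m₂ + 2, (op i).degree < ((m₁ + m₂ + 1 : ℕ) : WithBot ℕ) := by
    intro i hi
    rw [hop]
    dsimp only
    rw [rowIdx]
    split_ifs with h
    · rw [degree_dOp_iterate D h₁]
      exact_mod_cast (by omega : m₁ + (m₂ - i) < m₁ + m₂ + 1)
    · rw [degree_dOp_iterate D h₂]
      exact_mod_cast (by omega : m₂ + (m₁ + m₂ + 1 - i) < m₁ + m₂ + 1)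
  intro hdet
  obtain ⟨v, hvne, hv⟩ := Matrix.exists_vecMul_eq_zero_iff.2 hdet
  have hcol : ∀ j, ∑ i, v i * M i j = 0 := fun j => congrFun hv j
  set t : Fin (m₁ + m₂ + 2) → E := fun j =>
    if (j : ℕ) ≤ m₁ + m₂ then (⇑D)^[m₁ + m₂ - j] u else 1 with ht
  have hrow : ∀ i, i ≠ i₀ → ∑ j, M i j * t j = 0 := by
    intro i hi
    rw [Finset.sum_congr rfl fun j _ => by rw [hM i j hi],
      sum_row_mul D u (m₁ + m₂) (fun k => (op i).coeff k) (c i),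
      ← opVal_eq D u (hdeg i i.2)]
    exact hc i
  have hv0 : v i₀ = 0 := by
    have h : ∑ j, (∑ i, v i * M i j) * t j = 0 := by simp [hcol]
    simp only [Finset.sum_mul, mul_assoc] at h
    rw [Finset.sum_comm] at h
    simp only [← Finset.mul_sum] at h
    rw [Finset.sum_eq_single i₀ (fun i _ hi => by rw [hrow i hi, mul_zero]) (by simp)] at h
    exact (mul_eq_zero.1 h).resolve_right hM₀
  let w : ℕ → E := fun i => if h : i < m₁ + m₂ + 2 then v ⟨i, h⟩ else 0
  have hwv : ∀ i : Fin (m₁ + m₂ + 2), w i = v i := fun i => dif_pos i.2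
  have hsum : ∑ i ∈ Finset.range (m₁ + m₂ + 2), w i • op i = 0 := by
    rw [Finset.sum_range fun i => w i • op i]
    ext k
    rw [Polynomial.finsetSum_coeff, Polynomial.coeff_zero]
    rcases Nat.lt_or_ge (m₁ + m₂) k with hk | hk
    · refine Finset.sum_eq_zero fun i _ => ?_
      rw [Polynomial.coeff_smul, Polynomial.coeff_eq_zero_of_degree_lt, smul_zero]
      exact lt_of_lt_of_le (hdeg i i.2) (by exact_mod_cast hk)
    · rw [← hcol ⟨m₁ + m₂ - k, by omega⟩]
      refine Finset.sum_congr rfl fun i _ => ?_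
      rw [Polynomial.coeff_smul, smul_eq_mul, hwv]
      by_cases hi : i = i₀
      · rw [hi, hv0, zero_mul, zero_mul]
      · rw [hM i _ hi, if_pos (Nat.sub_le _ _), Nat.sub_sub_self hk]
  have hw : ∀ i < m₁ + m₂ + 2, w i = 0 := by
    refine rows_relation_trivial D h₁ h₂ hS w hsum ?_
    rcases hi₀ with h | h
    · left; rw [← h, hwv, hv0]
    · right; rw [← h, hwv, hv0]
  exact hvne (funext fun i => by rw [← hwv, hw i i.2]; rfl)

end Nonvanishing

/-! ### The resultant -/

section Resultant

variable {F E : Type*} [Field F] [Field E] [Algebra F E]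

lemma rowIdx_lt {m₁ m₂ i i₀ : ℕ} (hi : i < m₁ + m₂ + 2) (hi₀ : i₀ = 0 ∨ i₀ = m₂ + 1)
    (hne : i ≠ i₀) (h : (rowIdx m₁ m₂ i).1 = (rowIdx m₁ m₂ i₀).1) :
    (rowIdx m₁ m₂ i).2 < (rowIdx m₁ m₂ i₀).2 := by
  unfold rowIdx at *
  split_ifs at * <;> simp_all <;> omega

/-- The matrix whose determinant is the differential resultant of the fractions `P 0 / Q 0` and
`P 1 / Q 1`, with the two parametrizing fractions indexed by `Fin 2`. -/
def resMatrix (d : Derivation ℤ (MvPolynomial (Fin 3 × ℕ) F) (MvPolynomial (Fin 3 × ℕ) F))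
    (P Q : Fin 2 → MvPolynomial ℕ F) (m₁ m₂ : ℕ) :
    Matrix (Fin (m₁ + m₂ + 2)) (Fin (m₁ + m₂ + 2)) (MvPolynomial (Fin 2 × ℕ) F) :=
  Matrix.of fun i j => rowEntry (m₁ + m₂) j
    ((⇑d)^[(rowIdx m₁ m₂ i).2] (defPoly (rowIdx m₁ m₂ i).1 (P (rowIdx m₁ m₂ i).1)
      (Q (rowIdx m₁ m₂ i).1)))

lemma deltaRes_eq_det
    (d : Derivation ℤ (MvPolynomial (Fin 3 × ℕ) F) (MvPolynomial (Fin 3 × ℕ) F))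
    (P₁ Q₁ P₂ Q₂ : MvPolynomial ℕ F) (m₁ m₂ : ℕ) :
    deltaRes F d P₁ Q₁ P₂ Q₂ m₁ m₂ = (resMatrix d ![P₁, P₂] ![Q₁, Q₂] m₁ m₂).det := by
  unfold deltaRes resMatrix
  congr 2
  ext1 i
  ext1 j
  have h : resRow F d P₁ Q₁ P₂ Q₂ m₁ m₂ i = (⇑d)^[(rowIdx m₁ m₂ i).2]
      (defPoly (rowIdx m₁ m₂ i).1 ((![P₁, P₂] : Fin 2 → _) (rowIdx m₁ m₂ i).1)
        ((![Q₁, Q₂] : Fin 2 → _) (rowIdx m₁ m₂ i).1)) := by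
    unfold resRow rowIdx
    split_ifs <;> rfl
  rw [h]
  rfl

variable {D : Derivation ℤ E E} {δF : Derivation ℤ F F}
  {d : Derivation ℤ (MvPolynomial (Fin 3 × ℕ) F) (MvPolynomial (Fin 3 × ℕ) F)} {u : E}

/-- The resultant has degree one in the variable of the top row of either block: row `0` belongs to
`x_{m₂}`, row `m₂ + 1` to `y_{m₁}`. -/
lemma degreeOf_resMatrix_det
    (hD : ∀ a : F, D (algebraMap F E a) = algebraMap F E (δF a))
    (hdC : ∀ a : F, d (C a) = C (δF a))
    (hdX : ∀ (i : Fin 3) (k : ℕ), d (X (i, k)) = X (i, k + 1))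
    (hu : DiffTrans F D u) (P Q : Fin 2 → MvPolynomial ℕ F)
    (hP : ∀ i, (P i).totalDegree ≤ 1) (hQ : ∀ i, (Q i).totalDegree ≤ 1)
    (hrel : ∀ i, IsRelPrime (P i) (Q i)) (m : Fin 2 → ℕ)
    (hm : ∀ i, max (ordU (P i)) (ordU (Q i)) = (m i : WithBot ℕ))
    (η : Fin 2 → E) (hη : ∀ i, η i = evalD F D u (P i) / evalD F D u (Q i))
    (hproper : u ∈ genDF F D {η 0, η 1})
    (i₀ : Fin (m 0 + m 1 + 2)) (hi₀ : (i₀ : ℕ) = 0 ∨ (i₀ : ℕ) = m 1 + 1) :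
    degreeOf (rowIdx (m 0) (m 1) i₀) (resMatrix d P Q (m 0) (m 1)).det = 1 := by
  have hPn : ∀ i, ∀ k ∈ (P i).vars, k < m i + 1 := fun i =>
    vars_lt_of_ord ((le_max_left _ _).trans (hm i).le)
  have hQn : ∀ i, ∀ k ∈ (Q i).vars, k < m i + 1 := fun i =>
    vars_lt_of_ord ((le_max_right _ _).trans (hm i).le)
  have hQ0 : ∀ i, evalD F D u (Q i) ≠ 0 := fun i h =>
    ne_zero_of_isRelPrime (hrel i) (hm i) ((injective_iff_map_eq_zero (evalD F D u)).1 hu _ h)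
  have hη' : ∀ i, η i * evalD F D u (Q i) = evalD F D u (P i) := fun i => by
    rw [hη, div_mul_cancel₀ _ (hQ0 i)]
  set l : Fin 2 → Polynomial E := fun i => linOp (η i) (P i) (Q i) (m i + 1) with hl
  have hdeg : ∀ i, (l i).degree = m i := fun i =>
    degree_linOp (hP i) (hQ i) (hrel i) (hm i) hu (hη' i)
  set G := Set.range (fun k => (dOp D)^[k] (l 0)) ∪ Set.range (fun k => (dOp D)^[k] (l 1)) with hG
  have hlG : ∀ i, l i ∈ Submodule.span E G := by
    intro i
    apply Submodule.subset_span
    fin_cases i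
    · exact Or.inl ⟨0, rfl⟩
    · exact Or.inr ⟨0, rfl⟩
  have hS : (1 : Polynomial E) ∈ Submodule.span E G := by
    refine one_mem_of_mem_genDF hD hdC hdX hu hproper _ (fun w hw => dOp_mem_span D ?_ hw) ?_
    · rintro _ (⟨k, rfl⟩ | ⟨k, rfl⟩)
      · exact Submodule.subset_span (Or.inl ⟨k + 1, Function.iterate_succ_apply' _ _ _⟩)
      · exact Submodule.subset_span (Or.inr ⟨k + 1, Function.iterate_succ_apply' _ _ _⟩)
    · have h : ∀ i, ∃ w ∈ Submodule.span E G, IsDiff F D u (η i) w := fun i =>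
        ⟨_, Submodule.smul_mem _ _ (hlG i),
          isDiff_fraction (hP i) (hQ i) (hPn i) (hQn i) (hQ0 i) (hη' i)⟩
      rintro s (rfl | rfl)
      · exact h 0
      · exact h 1
  let r : ℕ → Fin 2 × ℕ := rowIdx (m 0) (m 1)
  choose g hg hgM using fun i j : Fin (m 0 + m 1 + 2) =>
    rowEntry_iterate hdC hdX (r i).1 (P (r i).1) (hQ (r i).1) (m 0 + m 1) (r i).2 j
  have hgM' : ∀ i j, resMatrix d P Q (m 0) (m 1) i j
      = X (r i) * C (constEntry (m 0 + m 1) j (Q (r i).1)) + g i j := hgM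
  refine degreeOf_det_eq_one _ (r i₀) i₀ _ (g i₀) (fun j => ?_) (hgM' i₀) (fun i j hi => ?_) ?_
  · exact supported_mono (fun w hw h => by rw [h] at hw; exact lt_irrefl _ hw.2) (hg i₀ j)
  · have hlt := rowIdx_lt i.2 hi₀ (fun h => hi (Fin.ext h))
    have hne : r i ≠ r i₀ := fun h => by
      have := hlt (congrArg Prod.fst h)
      exact this.ne (congrArg Prod.snd h)
    rw [hgM']
    refine add_mem (mul_mem ?_ (Subalgebra.algebraMap_mem _ _)) ?_
    · exact Algebra.subset_adjoin ⟨_, hne, rfl⟩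
    · refine supported_mono (fun w hw h => ?_) (hg i j)
      rw [h] at hw
      exact lt_asymm hw.2 (hlt hw.1.symm)
  -- nonvanishing is checked at the point `(η 0, η 1)` of the curve
  · set M := (resMatrix d P Q (m 0) (m 1)).updateRow i₀
      fun j => C (constEntry (m 0 + m 1) j (Q (r i₀).1)) with hMdef
    intro hdet
    have hmap : (((evalD2 F D (η 0) (η 1)).mapMatrix M)).det = 0 := by
      rw [← AlgHom.map_det, hdet, map_zero]
    let c : ℕ → E := fun i => ev3 D ![η 0, η 1, 0]
      ((⇑d)^[(r i).2] (defPoly (r i).1 (P (r i).1) (Q (r i).1)))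
    refine det_ne_zero_of_rows D u (hdeg 0) (hdeg 1) hS c (fun i => ?_) i₀ hi₀ _
      (fun i j hi => ?_) ?_ hmap
    · have hk : ∀ (a : Fin 2) (k : ℕ), opVal D u ((dOp D)^[k] (l a)) +
          ev3 D ![η 0, η 1, 0] ((⇑d)^[k] (defPoly a (P a) (Q a))) = 0 := by
        intro a k
        induction k with
        | zero =>
          rw [Function.iterate_zero_apply, Function.iterate_zero_apply,
            ev3_defPoly (hP a) (hQ a)]
          exact opVal_linOp (hP a) (hQ a) (hPn a) (hQn a) (hη' a)
        | succ k ih =>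
          rw [Function.iterate_succ_apply', Function.iterate_succ_apply', opVal_dOp,
            ev3_d D hD hdC hdX, ← map_add, ih, map_zero]
      exact hk _ _
    · rw [AlgHom.mapMatrix_apply, Matrix.map_apply, hMdef, Matrix.updateRow_ne hi]
      change evalD2 F D (η 0) (η 1) (rowEntry _ _ _) = _
      unfold rowEntry
      split_ifs with h
      · rw [evalD2_projXY]
        exact ev3_pderiv_iterate D _ _ _ hD hdC hdX
          (ev3_pderiv_defPoly (hP _) (hQ _) (hPn _) (hQn _) η _) _ _
      · rw [evalD2_projXY]
    · have hQN : ∀ k ∈ (Q (r i₀).1).vars, k < m 0 + m 1 + 1 := by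
        intro k hk
        have h1 := hQn _ k hk
        have h2 : ∀ a, m a ≤ m 0 + m 1 := by
          intro a; fin_cases a <;> simp
        have := h2 (r i₀).1
        omega
      have hval := evalD_affine (D := D) (u := u) (hQ (r i₀).1) hQN
      have hpair := sum_row_mul D u (m 0 + m 1)
        (fun k => algebraMap F E (coeff (Finsupp.single k 1) (Q (r i₀).1)))
        (algebraMap F E (coeff 0 (Q (r i₀).1)))
      replace hpair := hpair.trans ((add_comm _ _).trans hval.symm)
      refine fun h => hQ0 (r i₀).1 ?_
      rw [← hpair, ← h]
      refine Finset.sum_congr rfl fun j _ => ?_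
      congr 1
      rw [AlgHom.mapMatrix_apply, Matrix.map_apply, hMdef, Matrix.updateRow_self]
      simp only [evalD2, aeval_C, constEntry]
      split_ifs <;> rfl

/-- The resultant only involves `x_0, …, x_{m₂}` and `y_0, …, y_{m₁}`. -/
lemma resMatrix_det_mem_supported
    (hdC : ∀ a : F, d (C a) = C (δF a))
    (hdX : ∀ (i : Fin 3) (k : ℕ), d (X (i, k)) = X (i, k + 1))
    (P Q : Fin 2 → MvPolynomial ℕ F) (hQ : ∀ i, (Q i).totalDegree ≤ 1) (m₁ m₂ : ℕ) :
    (resMatrix d P Q m₁ m₂).det ∈ supported F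
      {v : Fin 2 × ℕ | (v.1 = 0 → v.2 ≤ m₂) ∧ (v.1 = 1 → v.2 ≤ m₁)} := by
  have hr : ∀ i < m₁ + m₂ + 2, ((rowIdx m₁ m₂ i).1 = 0 → (rowIdx m₁ m₂ i).2 ≤ m₂) ∧
      ((rowIdx m₁ m₂ i).1 = 1 → (rowIdx m₁ m₂ i).2 ≤ m₁) := by
    intro i hi
    unfold rowIdx
    split_ifs
    · simp
    · simp; omega
  refine det_mem_supported fun i j => ?_
  obtain ⟨g, hg, h⟩ := rowEntry_iterate hdC hdX (rowIdx m₁ m₂ i).1 (P (rowIdx m₁ m₂ i).1)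
    (hQ (rowIdx m₁ m₂ i).1) (m₁ + m₂) (rowIdx m₁ m₂ i).2 j
  have hri := hr i i.2
  change rowEntry _ _ _ ∈ _
  rw [h]
  refine add_mem (mul_mem ?_ (Subalgebra.algebraMap_mem _ _)) ?_
  · exact Algebra.subset_adjoin ⟨_, hri, rfl⟩
  · refine supported_mono (fun w hw => ?_) hg
    exact ⟨fun h0 => hw.2.le.trans (hri.1 (hw.1.symm.trans h0)),
      fun h1 => hw.2.le.trans (hri.2 (hw.1.symm.trans h1))⟩

lemma ordIdx_eq {A : MvPolynomial (Fin 2 × ℕ) F} {i : Fin 2} {m : ℕ}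
    (hle : ∀ v ∈ A.vars, v.1 = i → v.2 ≤ m) (hmem : (i, m) ∈ A.vars) :
    ordIdx i A = (m : WithBot ℕ) := by
  apply le_antisymm
  · refine Finset.max_le fun k hk => ?_
    obtain ⟨v, hv, rfl⟩ := Finset.mem_image.1 hk
    rw [Finset.mem_filter] at hv
    exact WithBot.coe_le_coe.2 (hle v hv.1 hv.2)
  · exact Finset.le_max (Finset.mem_image.2 ⟨(i, m), by simp [hmem], rfl⟩)

end Resultant

/-- for a proper linear differential rational parametrization, the
differential resultant `R = δ-Res(f₁, f₂)` is nonzero, has `ord_x R = m₂`,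
`ord_y R = m₁`, and is linear in `x_{m₂}` and in `y_{m₁}`. -/
theorem deltaRes_of_proper_linear_param [CharZero F]
    (δF : Derivation ℤ F F) (D : Derivation ℤ E E)
    (hD : ∀ a : F, D (algebraMap F E a) = algebraMap F E (δF a))
    (dxyu : Derivation ℤ (MvPolynomial (Fin 3 × ℕ) F) (MvPolynomial (Fin 3 × ℕ) F))
    (hdC : ∀ a : F, dxyu (C a) = C (δF a))
    (hdX : ∀ (i : Fin 3) (k : ℕ), dxyu (X (i, k)) = X (i, k + 1))
    (u : E) (hu : DiffTrans F D u)
    (P₁ Q₁ P₂ Q₂ : MvPolynomial ℕ F)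
    (hd₁ : P₁.totalDegree ≤ 1) (hd₂ : Q₁.totalDegree ≤ 1)
    (hd₃ : P₂.totalDegree ≤ 1) (hd₄ : Q₂.totalDegree ≤ 1)
    (hrel₁ : IsRelPrime P₁ Q₁) (hrel₂ : IsRelPrime P₂ Q₂)
    (m₁ m₂ : ℕ) (hm₁ : max (ordU P₁) (ordU Q₁) = (m₁ : WithBot ℕ))
    (hm₂ : max (ordU P₂) (ordU Q₂) = (m₂ : WithBot ℕ))
    (hproper : genDF F D {evalD F D u P₁ / evalD F D u Q₁,
        evalD F D u P₂ / evalD F D u Q₂} = genDF F D {u}) :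
    deltaRes F dxyu P₁ Q₁ P₂ Q₂ m₁ m₂ ≠ 0 ∧
    ordIdx 0 (deltaRes F dxyu P₁ Q₁ P₂ Q₂ m₁ m₂) = (m₂ : WithBot ℕ) ∧
    ordIdx 1 (deltaRes F dxyu P₁ Q₁ P₂ Q₂ m₁ m₂) = (m₁ : WithBot ℕ) ∧
    MvPolynomial.degreeOf ((0 : Fin 2), m₂) (deltaRes F dxyu P₁ Q₁ P₂ Q₂ m₁ m₂) = 1 ∧
    MvPolynomial.degreeOf ((1 : Fin 2), m₁) (deltaRes F dxyu P₁ Q₁ P₂ Q₂ m₁ m₂) = 1 := by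
  have hdet := deltaRes_eq_det dxyu P₁ Q₁ P₂ Q₂ m₁ m₂
  have hdeg := degreeOf_resMatrix_det hD hdC hdX hu ![P₁, P₂] ![Q₁, Q₂]
    (Fin.forall_fin_two.2 ⟨hd₁, hd₃⟩) (Fin.forall_fin_two.2 ⟨hd₂, hd₄⟩)
    (Fin.forall_fin_two.2 ⟨hrel₁, hrel₂⟩) ![m₁, m₂] (Fin.forall_fin_two.2 ⟨hm₁, hm₂⟩)
    ![evalD F D u P₁ / evalD F D u Q₁, evalD F D u P₂ / evalD F D u Q₂]
    (Fin.forall_fin_two.2 ⟨rfl, rfl⟩)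
    (hproper.symm ▸ IntermediateField.subset_adjoin F _ ⟨u, rfl, 0, rfl⟩)
  have hx : degreeOf ((0 : Fin 2), m₂) (deltaRes F dxyu P₁ Q₁ P₂ Q₂ m₁ m₂) = 1 := by
    rw [hdet]
    exact hdeg ⟨0, Nat.succ_pos _⟩ (Or.inl rfl)
  have hy : degreeOf ((1 : Fin 2), m₁) (deltaRes F dxyu P₁ Q₁ P₂ Q₂ m₁ m₂) = 1 := by
    have h := hdeg ⟨m₂ + 1, by change m₂ + 1 < m₁ + m₂ + 2; omega⟩ (Or.inr rfl)
    have hr : rowIdx m₁ m₂ (m₂ + 1) = (1, m₁) := by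
      rw [rowIdx, if_neg (by omega), show m₁ + m₂ + 1 - (m₂ + 1) = m₁ by omega]
    rw [hdet, ← hr]
    exact h
  have hvars := mem_supported.1 (resMatrix_det_mem_supported hdC hdX ![P₁, P₂] ![Q₁, Q₂]
    (Fin.forall_fin_two.2 ⟨hd₂, hd₄⟩) m₁ m₂)
  rw [← hdet] at hvars
  refine ⟨fun h => ?_, ordIdx_eq (fun v hv => (hvars hv).1) ?_,
    ordIdx_eq (fun v hv => (hvars hv).2) ?_, hx, hy⟩
  · rw [h, degreeOf_zero] at hx
    exact zero_ne_one hx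
  · exact mem_vars_iff_degreeOf_ne_zero.2 (by rw [hx]; exact one_ne_zero)
  · exact mem_vars_iff_degreeOf_ne_zero.2 (by rw [hy]; exact one_ne_zero)
end DiffCurve
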